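/- arXiv:2003.09977 — 3 statements merged into one kernel-verified Lean document; each statement's English description precedes it below -/
import Mathlib

section
/- Let h ∈ ℤ[X] be monic irreducible with h(0) ≠ 0, let K = ℚ[X]/(h), let α be the class of X, and let q be a positive integer such that q·α^{-1} is integral over ℤ. Let r ≥ 1 be an integer such that ℚ(α^r) = K. Set R_h = ℤ[α, q·α^{-1}] and R_g = ℤ[α^r, q^r·α^{-r}], subrings of K. Then R_g ⊆ R_h, and for any two nonzero finitely generated R_h-submodules I and J of K: every R_g-linear map I → J is R_h-linear, and I and J are isomorphic as R_h-modules if and only if they are isomorphic as R_g-modules. -/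
open Polynomial

set_option synthInstance.maxHeartbeats 1000000
set_option maxHeartbeats 1600000

/-- The number field `K = ℚ[X]/(h)` attached to an integer polynomial `h`. -/
abbrev NumFld (h : Polynomial ℤ) : Type := AdjoinRoot (h.map (Int.castRingHom ℚ))

/-- The class `α` of `X` in `ℚ[X]/(h)`. -/
noncomputable abbrev rootCls (h : Polynomial ℤ) : NumFld h :=
  AdjoinRoot.root (h.map (Int.castRingHom ℚ))

/-!
A quotient `a = s / t` with `s, t ∈ S` can be cleared of its denominator: an `S`-linear map `φ`
between `T`-submodules of `K` satisfies `t φ(a x) = φ(s x) = s φ(x) = t (a φ(x))`. Hence if `S ⊆ T`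
and `K = Frac S`, then `S`-linearity and `T`-linearity coincide. For `S = ℤ[α^r, q^r α^{-r}]` the
equality `K = Frac S` holds because the fractions of `S` form a subfield containing `ℚ` and `α^r`.
-/

theorem compatibleSMul_of_isFractionRing (R K : Type*) {T M N : Type*} [CommRing R] [CommRing T]
    [CommRing K] [Algebra R T] [Algebra T K] [Algebra R K] [IsScalarTower R T K] [FaithfulSMul T K]
    [IsFractionRing R K] [AddCommMonoid M] [Module R M] [Module T M] [IsScalarTower R T M]
    [AddCommMonoid N] [Module R N] [Module T N] [IsScalarTower R T N] [Module.IsTorsionFree R N] :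
    LinearMap.CompatibleSMul M N T R where
  map_smul φ t x := by
    obtain ⟨⟨a, b⟩, hab⟩ := IsLocalization.surj (nonZeroDivisors R) (algebraMap T K t)
    have hbt : (b : R) • t = algebraMap R T a := by
      apply FaithfulSMul.algebraMap_injective T K
      rw [Algebra.smul_def, map_mul, mul_comm, ← IsScalarTower.algebraMap_apply,
        ← IsScalarTower.algebraMap_apply, hab]
    have hb : IsRegular (b : R) := isRegular_iff_mem_nonZeroDivisors.mpr b.2
    refine hb.isSMulRegular (M := N) ?_
    calc (b : R) • φ (t • x) = φ (((b : R) • t) • x) := by rw [smul_assoc, φ.map_smul]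
      _ = a • φ x := by rw [hbt, algebraMap_smul, φ.map_smul]
      _ = (b : R) • t • φ x := by rw [← smul_assoc, hbt, algebraMap_smul]

theorem isFractionRing_of_adjoin_eq_top {A F K : Type*} [CommRing A] [Field F] [Field K]
    [Algebra A F] [IsFractionRing A F] [Algebra A K] [Algebra F K] [IsScalarTower A F K]
    {S : Subalgebra A K} {s : Set K} (hs : s ⊆ S) (hgen : IntermediateField.adjoin F s = ⊤) :
    IsFractionRing S K := by
  have hF : Set.range (algebraMap F K) ⊆ Subfield.closure (S : Set K) := by
    rintro _ ⟨c, rfl⟩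
    obtain ⟨a, b, -, rfl⟩ := IsFractionRing.div_surjective A c
    rw [map_div₀, ← IsScalarTower.algebraMap_apply, ← IsScalarTower.algebraMap_apply]
    exact div_mem (Subfield.subset_closure (S.algebraMap_mem a))
      (Subfield.subset_closure (S.algebraMap_mem b))
  have hK (z : K) : z ∈ Subfield.closure (S : Set K) := by
    have hz : z ∈ (IntermediateField.adjoin F s).toSubfield := by
      simp only [hgen, IntermediateField.top_toSubfield, Subfield.mem_top]
    rw [IntermediateField.adjoin_toSubfield] at hz
    exact Subfield.closure_le.mpr (Set.union_subset hF (hs.trans Subfield.subset_closure)) hz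
  refine .of_field _ _ fun z ↦ ?_
  obtain ⟨x, hx, y, hy, hxy⟩ := Subfield.mem_closure_iff.mp (hK z)
  rw [← Subalgebra.coe_toSubring, Subring.closure_eq] at hx hy
  exact ⟨⟨x, hx⟩, ⟨y, hy⟩, hxy.symm⟩

theorem adjoin_image_pow_le {R A : Type*} [CommSemiring R] [Semiring A] [Algebra R A] (s : Set A)
    (n : ℕ) : Algebra.adjoin R ((· ^ n) '' s) ≤ Algebra.adjoin R s := by
  rw [Algebra.adjoin_le_iff]
  rintro _ ⟨x, hx, rfl⟩
  exact pow_mem (Algebra.subset_adjoin hx) n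

section CommutesWith

variable {A K : Type*} [CommRing A] [CommRing K] [Algebra A K] {S T : Subalgebra A K}
  {I J : Submodule T K}

/-- The additive map `φ` commutes with multiplication by the elements of `S`, wherever such a
multiplication stays inside `I`; when `I` and `J` are `S`-modules this is `S`-linearity. Phrasing it
inside `K` avoids choosing an `S`-module structure on the `T`-modules `I` and `J`. -/
def CommutesWith (S : Subalgebra A K) (φ : I →+ J) : Prop :=
  ∀ a ∈ S, ∀ x y : I, (y : K) = a * (x : K) → (φ y : K) = a * (φ x : K)

theorem CommutesWith.mono {S₁ S₂ : Subalgebra A K} {φ : I →+ J} (hS : S₁ ≤ S₂)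
    (hφ : CommutesWith S₂ φ) : CommutesWith S₁ φ :=
  fun a ha ↦ hφ a (hS ha)

theorem commutesWith_iff_map_smul {φ : I →+ J} :
    CommutesWith T φ ↔ ∀ (t : T) (x : I), φ (t • x) = t • φ x := by
  refine ⟨fun hφ t x ↦ Subtype.ext (hφ t t.2 x (t • x) rfl), fun hφ a ha x y hxy ↦ ?_⟩
  obtain rfl : y = (⟨a, ha⟩ : T) • x := Subtype.ext hxy
  exact congrArg Subtype.val (hφ ⟨a, ha⟩ x)

theorem CommutesWith.of_isFractionRing [IsFractionRing S K] {φ : I →+ J} (hST : S ≤ T)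
    (hφ : CommutesWith S φ) : CommutesWith T φ := by
  let : Algebra S T := (Subalgebra.inclusion hST).toAlgebra
  have : IsScalarTower S T K := .of_algebraMap_eq fun _ ↦ rfl
  have : Module.IsTorsionFree S J :=
    ⟨fun s hs x y hxy ↦ Subtype.ext <|
      (IsLocalization.map_units K ⟨s, isRegular_iff_mem_nonZeroDivisors.mp hs⟩).mul_left_cancel
        (congrArg Subtype.val hxy)⟩
  have := compatibleSMul_of_isFractionRing S K (T := T) (M := I) (N := J)
  let f : I →ₗ[S] J :=
    { φ with map_smul' := fun s x ↦ Subtype.ext (hφ s s.2 x (s • x) rfl) }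
  exact commutesWith_iff_map_smul.mpr f.map_smul_of_tower

theorem nonempty_linearEquiv_iff_exists_commutesWith :
    Nonempty (I ≃ₗ[T] J) ↔ ∃ e : I ≃+ J, CommutesWith T (e : I →+ J) := by
  simp only [commutesWith_iff_map_smul]
  exact ⟨fun ⟨e⟩ ↦ ⟨e.toAddEquiv, e.map_smul⟩, fun ⟨e, he⟩ ↦ ⟨e.toLinearEquiv he⟩⟩

end CommutesWith

theorem statement_4_general {A F K : Type*} [CommRing A] [Field F] [Field K] [Algebra A F]
    [IsFractionRing A F] [Algebra A K] [Algebra F K] [IsScalarTower A F K] (α β : K) (r : ℕ)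
    (hgen : IntermediateField.adjoin F {α ^ r} = ⊤) :
    letI Rh : Subalgebra A K := Algebra.adjoin A {α, β}
    letI Rg : Subalgebra A K := Algebra.adjoin A {α ^ r, β ^ r}
    Rg ≤ Rh ∧
    ∀ I J : Submodule Rh K,
      (∀ φ : I →+ J, CommutesWith Rg φ → CommutesWith Rh φ) ∧
      (Nonempty (I ≃ₗ[Rh] J) ↔ ∃ e : I ≃+ J, CommutesWith Rg (e : I →+ J)) := by
  have hle : Algebra.adjoin A {α ^ r, β ^ r} ≤ Algebra.adjoin A {α, β} := by
    simpa only [Set.image_pair] using adjoin_image_pow_le {α, β} r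
  have : IsFractionRing (Algebra.adjoin A {α ^ r, β ^ r}) K :=
    isFractionRing_of_adjoin_eq_top
      ((Set.singleton_subset_iff.mpr (Set.mem_insert _ _)).trans Algebra.subset_adjoin) hgen
  refine ⟨hle, fun I J ↦ ⟨fun φ ↦ .of_isFractionRing hle, ?_⟩⟩
  rw [nonempty_linearEquiv_iff_exists_commutesWith]
  exact exists_congr fun e ↦ ⟨.mono hle, .of_isFractionRing hle⟩

/-- Let `h ∈ ℤ[X]` be monic irreducible with `h(0) ≠ 0`, `K = ℚ[X]/(h)`, `α` the class of
`X`, `q > 0` with `q·α⁻¹` integral over `ℤ`, and `r ≥ 1` with `ℚ(α^r) = K`. Set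
`R_h = ℤ[α, q·α⁻¹]` and `R_g = ℤ[α^r, q^r·α^{-r}]`. Then `R_g ⊆ R_h`, and for any two
nonzero finitely generated `R_h`-submodules `I`, `J` of `K`: every `R_g`-linear map
`I → J` is `R_h`-linear, and `I ≅ J` as `R_h`-modules iff `I ≅ J` as `R_g`-modules. -/
theorem statement_4 (h : Polynomial ℤ) (hmonic : h.Monic) (hh0 : h.eval 0 ≠ 0)
    [hirr : Fact (Irreducible (h.map (Int.castRingHom ℚ)))]
    (q : ℕ) (hq : 0 < q)
    (hint : IsIntegral ℤ ((q : NumFld h) * (rootCls h)⁻¹))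
    (r : ℕ) (hr : 1 ≤ r)
    (hgen : IntermediateField.adjoin ℚ {(rootCls h) ^ r} = ⊤) :
    letI Rh : Subalgebra ℤ (NumFld h) :=
      Algebra.adjoin ℤ {rootCls h, (q : NumFld h) * (rootCls h)⁻¹}
    letI Rg : Subalgebra ℤ (NumFld h) :=
      Algebra.adjoin ℤ {(rootCls h) ^ r, (q : NumFld h) ^ r * ((rootCls h)⁻¹) ^ r}
    Rg ≤ Rh ∧
    ∀ I J : Submodule Rh (NumFld h), I ≠ ⊥ → I.FG → J ≠ ⊥ → J.FG →
      ((∀ φ : I →+ J,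
        (∀ a ∈ Rg, ∀ x y : I, (y : NumFld h) = a * (x : NumFld h) →
          (φ y : NumFld h) = a * (φ x : NumFld h)) →
        (∀ a ∈ Rh, ∀ x y : I, (y : NumFld h) = a * (x : NumFld h) →
          (φ y : NumFld h) = a * (φ x : NumFld h))) ∧
      (Nonempty (I ≃ₗ[Rh] J) ↔
        ∃ e : I ≃+ J, ∀ a ∈ Rg, ∀ x y : I, (y : NumFld h) = a * (x : NumFld h) →
          (e y : NumFld h) = a * (e x : NumFld h))) := by
  rw [← mul_pow]
  exact (statement_4_general (A := ℤ) _ ((q : NumFld h) * (rootCls h)⁻¹) r hgen).imp_right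
    fun hIJ I J _ _ _ _ ↦ hIJ I J
end

section
/- Let K = ℚ[X]/(X⁶ − X³ + 8) and let α be the class of X in K. Then K is a number field of degree 6, the subring ℤ[α, 2·α^{-1}] of K generated by α and 2·α^{-1} equals the ring of integers of K, and the class group of K has exactly 3 elements. -/
/-!
Put `β = 2 / α`. The defining equation says `αβ = 2` and `α³ + β³ = 1`, and the six elements
`1, α³, α, β², β, α²` span the ring `ℤ[α, β]`. The degree is at most six, and it is divisible by
`2` and by `3` because `α³` is a root of `X² - X + 8` and `α + β` is a root of `X³ - 6X - 1`.

The trace form has discriminant `-279³` and shows that `93 z ∈ ℤ[α, β]` for every integer `z`.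
The elements `2α³ - 1`, with square `-31`, and `α + β + 2`, whose cube is divisible by `3`, are
radical in `ℤ[α, β]`, and dividing by a radical element cannot create new integers; hence
`ℤ[α, β]` is the ring of integers.

By Minkowski every ideal class contains an ideal of norm at most `148`. If a prime `P` contains
some `x ≠ 0` with `N(x) < N(P)²`, then the class of `P` is inverse to that of an ideal of smaller
norm, so by descent the class group is generated by the primes of norm at most `148` without such
an element. These are at most the two primes of norm `2`, `(2, α - 1)` and `(2, β - 1)`. Their
product is principal and `(2, β - 1)³` is generated by `β - 1`, so the class of `(2, β - 1)`
generates the class group and has order `1` or `3`. It is not trivial: every element norm `N` is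
itself a norm from the quadratic ring `ℤ[α³]`, so that `4N = (2r + s)² + 31s²` for integers `r`
and `s`, which excludes `N = 2`.
-/

open Matrix Module nonZeroDivisors

/-- A pair `(a, b)` with `ab = 2` and `a³ + b³ = 1`, the relations between a root `a` of
`X⁶ - X³ + 8` and `b = 2 / a`. They are symmetric in `a` and `b`. -/
structure RootPair {S : Type*} [CommRing S] (a b : S) : Prop where
  mul_eq_two : a * b = 2
  cube_add_cube : a ^ 3 + b ^ 3 = 1

/-- The elements `1, a³, a, b², b, a²`, an integral basis for the ring generated by a root
pair. The pairs `(1, a³)`, `(a, b²)`, `(b, a²)` each span a module over the ring generated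
by `a³`. -/
def monomials {S : Type*} [CommRing S] (a b : S) : Fin 6 → S :=
  ![1, a ^ 3, a, b ^ 2, b, a ^ 2]

/-- The element with the given coordinates with respect to `monomials a b`. -/
def ofCoords (R : Type*) {S : Type*} [CommRing R] [CommRing S] [Algebra R S] (a b : S) :
    (Fin 6 → R) →ₗ[R] S :=
  Fintype.linearCombination R (monomials a b)

/-- The matrix of multiplication by the element with coordinates `c`. -/
def mulMatrix {R : Type*} [CommRing R] (c : Fin 6 → R) : Matrix (Fin 6) (Fin 6) R :=
  !![c 0, -8 * c 1, 2 * c 4, c 4 + 4 * c 5, 2 * c 2 + c 3, 4 * c 3;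
     c 1, c 0 + c 1, c 5, -c 4, -c 3, c 2;
     c 2, c 2 + 4 * c 3, c 0 + c 1, 4 * c 1, 2 * c 5, 2 * c 4 + c 5;
     c 3, -2 * c 2, -2 * c 1, c 0, c 4, -2 * c 5;
     c 4, -4 * c 5, 2 * c 3, 2 * c 2 + c 3, c 0, -4 * c 1;
     c 5, 2 * c 4 + c 5, c 2, -2 * c 3, 2 * c 1, c 0 + c 1]

/-- The norm of the element with coordinates `c` down to the quadratic ring generated by
`ω = a³`, where `ω² = ω - 8`. The element is `u + va + wa²` with `u = c₀ + c₁ω`,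
`v = c₂ + 4c₃/ω`, `w = c₅ + 2c₄/ω`, and its norm is `u³ + ωv³ + ω²w³ - 3ωuvw`. -/
def relNorm {R : Type*} [CommRing R] (c : Fin 6 → R) : QuadraticAlgebra R (-8) 1 where
  re := c 0 ^ 3 - 24 * c 0 * c 1 ^ 2 - 8 * c 1 ^ 3 + 12 * c 2 ^ 2 * c 3 + 6 * c 2 * c 3 ^ 2
    - 7 * c 3 ^ 3 + c 4 ^ 3 + 12 * c 4 ^ 2 * c 5 - 8 * c 5 ^ 3
    - 3 * c 0 * (2 * c 2 * c 4 + 4 * c 3 * c 5 + c 3 * c 4)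
    + 24 * c 1 * (c 2 * c 5 - c 3 * c 4)
  im := 3 * c 0 ^ 2 * c 1 + 3 * c 0 * c 1 ^ 2 - 7 * c 1 ^ 3 + c 2 ^ 3 - 6 * c 2 * c 3 ^ 2
    - c 3 ^ 3 - c 4 ^ 3 + 6 * c 4 * c 5 ^ 2 + c 5 ^ 3
    - 3 * (c 0 + c 1) * (c 2 * c 5 - c 3 * c 4)
    - 3 * c 1 * (2 * c 2 * c 4 + 4 * c 3 * c 5 + c 3 * c 4)

/-- The norm of the element with coordinates `c`, a form of degree six in `c`. -/
def normForm {R : Type*} [CommRing R] (c : Fin 6 → R) : R :=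
  QuadraticAlgebra.norm (relNorm c)

set_option maxHeartbeats 1000000 in
-- `ring` has to expand a determinant of size six.
theorem det_mulMatrix {R : Type*} [CommRing R] (c : Fin 6 → R) :
    (mulMatrix c).det = normForm c := by
  simp only [mulMatrix, normForm, QuadraticAlgebra.norm_def, relNorm]
  generalize c 0 = x₀, c 1 = x₁, c 2 = x₂, c 3 = x₃, c 4 = x₄, c 5 = x₅
  simp [det_succ_row_zero, Fin.sum_univ_succ, Fin.succAbove, submatrix]
  ring

theorem four_mul_normForm {R : Type*} [CommRing R] (c : Fin 6 → R) :
    4 * normForm c = (2 * (relNorm c).re + (relNorm c).im) ^ 2 + 31 * (relNorm c).im ^ 2 := by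
  rw [normForm, QuadraticAlgebra.norm_def]
  ring

theorem normForm_nonneg (c : Fin 6 → ℤ) : 0 ≤ normForm c := by
  have h := four_mul_normForm c
  nlinarith [sq_nonneg (2 * (relNorm c).re + (relNorm c).im), sq_nonneg (relNorm c).im]

theorem normForm_ne_two (c : Fin 6 → ℤ) : normForm c ≠ 2 := by
  intro hc
  have h := four_mul_normForm c
  rw [hc] at h
  have him : (relNorm c).im = 0 := by
    by_contra him
    have : 0 < (relNorm c).im ^ 2 := by positivity
    nlinarith [sq_nonneg (2 * (relNorm c).re + (relNorm c).im)]
  rw [him] at h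
  have hre : (relNorm c).re * (relNorm c).re = 2 := by linarith
  exact Int.prime_two.not_isSquare ⟨(relNorm c).re, hre.symm⟩

section Coordinates

variable {R S : Type*} [CommRing R] [CommRing S] [Algebra R S] {a b : S}

theorem ofCoords_apply (a b : S) (c : Fin 6 → R) : ofCoords R a b c =
    algebraMap R S (c 0) + algebraMap R S (c 1) * a ^ 3 + algebraMap R S (c 2) * a
      + algebraMap R S (c 3) * b ^ 2 + algebraMap R S (c 4) * b + algebraMap R S (c 5) * a ^ 2 := by
  simp [ofCoords, Fintype.linearCombination_apply, Fin.sum_univ_six, monomials, Algebra.smul_def]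

theorem range_ofCoords (a b : S) :
    LinearMap.range (ofCoords R a b) = Submodule.span R (Set.range (monomials a b)) :=
  Fintype.range_linearCombination R (monomials a b)

theorem map_ofCoords {T : Type*} [CommRing T] [Algebra R T] (f : S →ₐ[R] T) (a b : S)
    (c : Fin 6 → R) : f (ofCoords R a b c) = ofCoords R (f a) (f b) c := by
  simp [ofCoords_apply]

theorem ofCoords_eq_add_add_two (a b : S) : ofCoords ℤ a b ![2, 0, 1, 0, 1, 0] = a + b + 2 := by
  simp only [ofCoords_apply, cons_val, map_zero, map_one, map_ofNat]
  ring

theorem ofCoords_eq_two_mul_cube_sub_one (a b : S) :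
    ofCoords ℤ a b ![-1, 2, 0, 0, 0, 0] = 2 * a ^ 3 - 1 := by
  simp only [ofCoords_apply, cons_val, map_zero, map_one, map_ofNat, map_neg]
  ring

end Coordinates

theorem map_mulMatrix_mulVec {R S : Type*} [CommRing R] [CommRing S] (f : R →+* S)
    (c d : Fin 6 → R) : f ∘ (mulMatrix c *ᵥ d) = mulMatrix (f ∘ c) *ᵥ (f ∘ d) := by
  have hmap : mulMatrix (f ∘ c) = (mulMatrix c).map f := by
    ext i j
    fin_cases i <;> fin_cases j <;> simp [mulMatrix, map_ofNat]
  rw [hmap]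
  exact funext (RingHom.map_mulVec f _ d)

namespace RootPair

section

variable {S : Type*} [CommRing S] {a b : S}

theorem symm (h : RootPair a b) : RootPair b a :=
  ⟨by rw [mul_comm, h.mul_eq_two], by rw [add_comm, h.cube_add_cube]⟩

theorem map {T : Type*} [CommRing T] (h : RootPair a b) (f : S →+* T) : RootPair (f a) (f b) :=
  ⟨by rw [← map_mul, h.mul_eq_two, map_ofNat],
    by rw [← map_pow, ← map_pow, ← map_add, h.cube_add_cube, map_one]⟩

theorem of_map {T : Type*} [CommRing T] {f : S →+* T} (hf : Function.Injective f)
    (h : RootPair (f a) (f b)) : RootPair a b :=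
  ⟨hf (by rw [map_mul, h.mul_eq_two, map_ofNat]),
    hf (by rw [map_add, map_pow, map_pow, h.cube_add_cube, map_one])⟩

theorem sextic_eq_zero (h : RootPair a b) : a ^ 6 - a ^ 3 + 8 = 0 := by
  linear_combination a ^ 3 * h.cube_add_cube - (a ^ 2 * b ^ 2 + 2 * a * b + 4) * h.mul_eq_two

theorem cube_sq_sub_cube_add_eight (h : RootPair a b) : (a ^ 3) ^ 2 - a ^ 3 + 8 = 0 := by
  linear_combination h.sextic_eq_zero

theorem sq_sub_mul_sq_sub (h : RootPair a b) : (b ^ 2 - a) * (a ^ 2 - b) = 5 := by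
  linear_combination (a * b + 3) * h.mul_eq_two - h.cube_add_cube

theorem add_cube_sub_six_mul_sub_one (h : RootPair a b) :
    (a + b) ^ 3 - 6 * (a + b) - 1 = 0 := by
  linear_combination h.cube_add_cube + 3 * (a + b) * h.mul_eq_two

theorem add_add_two_cube (h : RootPair a b) :
    (a + b + 2) ^ 3 = 3 * (2 * (a + b) ^ 2 + 6 * (a + b) + 3) := by
  linear_combination h.add_cube_sub_six_mul_sub_one

theorem two_mul_cube_sub_one_sq (h : RootPair a b) : (2 * a ^ 3 - 1) ^ 2 = -31 := by
  linear_combination 4 * h.cube_sq_sub_cube_add_eight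

end

section

variable {R S : Type*} [CommRing R] [CommRing S] [Algebra R S] {a b : S}

theorem ofCoords_mul (h : RootPair a b) (c d : Fin 6 → R) :
    ofCoords R a b c * ofCoords R a b d = ofCoords R a b (mulMatrix c *ᵥ d) := by
  obtain ⟨h2, h3⟩ := h
  have a3_a3 : a ^ 3 * a ^ 3 = a ^ 3 - 8 := by
    linear_combination a ^ 3 * h3 - (a ^ 2 * b ^ 2 + 2 * a * b + 4) * h2
  have a3_a : a ^ 3 * a = a - 2 * b ^ 2 := by linear_combination a * h3 - b ^ 2 * h2
  have a3_b2 : a ^ 3 * b ^ 2 = 4 * a := by linear_combination (a ^ 2 * b + 2 * a) * h2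
  have a3_b : a ^ 3 * b = 2 * a ^ 2 := by linear_combination a ^ 2 * h2
  have a3_a2 : a ^ 3 * a ^ 2 = a ^ 2 - 4 * b := by
    linear_combination a ^ 2 * h3 - (a * b ^ 2 + 2 * b) * h2
  have a_b2 : a * b ^ 2 = 2 * b := by linear_combination b * h2
  have b2_b2 : b ^ 2 * b ^ 2 = b - 2 * a ^ 2 := by linear_combination b * h3 - a ^ 2 * h2
  have b2_b : b ^ 2 * b = 1 - a ^ 3 := by linear_combination h3
  have a2_b2 : a ^ 2 * b ^ 2 = 4 := by linear_combination (a * b + 2) * h2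
  have a2_b : a ^ 2 * b = 2 * a := by linear_combination a * h2
  have a2_a2 : a ^ 2 * a ^ 2 = a - 2 * b ^ 2 := by linear_combination a * h3 - b ^ 2 * h2
  have hsum : ∀ x : Fin 6 → R, ofCoords R a b x = ofCoords S a b (algebraMap R S ∘ x) := by
    simp [ofCoords_apply]
  rw [hsum, hsum, hsum, map_mulMatrix_mulVec]
  generalize algebraMap R S ∘ c = c, algebraMap R S ∘ d = d
  simp only [ofCoords_apply, mulMatrix, mulVec, dotProduct, Fin.sum_univ_six, of_apply, cons_val,
    Algebra.algebraMap_self, RingHom.id_apply]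
  linear_combination (c 1 * d 1) * a3_a3 + (c 1 * d 2 + c 2 * d 1) * a3_a
    + (c 1 * d 3 + c 3 * d 1) * a3_b2 + (c 1 * d 4 + c 4 * d 1) * a3_b
    + (c 1 * d 5 + c 5 * d 1) * a3_a2 + (c 2 * d 3 + c 3 * d 2) * a_b2
    + (c 2 * d 4 + c 4 * d 2) * h2 + c 3 * d 3 * b2_b2 + (c 3 * d 4 + c 4 * d 3) * b2_b
    + (c 3 * d 5 + c 5 * d 3) * a2_b2 + (c 4 * d 5 + c 5 * d 4) * a2_b + c 5 * d 5 * a2_a2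

theorem span_monomials (h : RootPair a b) :
    Submodule.span R (Set.range (monomials a b)) = (Algebra.adjoin R {a, b}).toSubmodule := by
  apply le_antisymm
  · have h1 : (1 : S) ∈ Algebra.adjoin R {a, b} := one_mem _
    have ha : a ∈ Algebra.adjoin R {a, b} := Algebra.subset_adjoin (by simp)
    have hb : b ∈ Algebra.adjoin R {a, b} := Algebra.subset_adjoin (by simp)
    rw [Submodule.span_le, Set.range_subset_iff]
    intro i
    fin_cases i
    exacts [h1, pow_mem ha 3, ha, pow_mem hb 2, hb, pow_mem ha 2]
  · rw [← range_ofCoords]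
    intro z hz
    induction hz using Algebra.adjoin_induction with
    | mem x hx =>
      rcases hx with rfl | rfl
      · exact ⟨![0, 0, 1, 0, 0, 0], by simp [ofCoords_apply]⟩
      · exact ⟨![0, 0, 0, 0, 1, 0], by simp [ofCoords_apply]⟩
    | algebraMap r => exact ⟨![r, 0, 0, 0, 0, 0], by simp [ofCoords_apply]⟩
    | add x y _ _ hx hy => exact add_mem hx hy
    | mul x y _ _ hx hy =>
      obtain ⟨⟨c, rfl⟩, d, rfl⟩ := And.intro hx hy
      exact ⟨_, (h.ofCoords_mul c d).symm⟩

end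

section Basis

variable {R S : Type*} [CommRing R] [CommRing S] [Algebra R S] {a b : S}

theorem ofCoords_equivFun {v : Basis (Fin 6) R S} (hv : ⇑v = monomials a b) (x : S) :
    ofCoords R a b (v.equivFun x) = x := by
  rw [ofCoords, Fintype.linearCombination_apply, ← hv, v.sum_equivFun]

theorem equivFun_ofCoords {v : Basis (Fin 6) R S} (hv : ⇑v = monomials a b) (c : Fin 6 → R) :
    v.equivFun (ofCoords R a b c) = c := by
  rw [← v.equivFun.eq_symm_apply, Basis.equivFun_symm_apply, hv, ofCoords,
    Fintype.linearCombination_apply]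

theorem ofCoords_ne_zero {v : Basis (Fin 6) R S} (hv : ⇑v = monomials a b) {c : Fin 6 → R}
    (hc : c ≠ 0) : ofCoords R a b c ≠ 0 := fun h0 =>
  hc (by rw [← equivFun_ofCoords hv c, h0, map_zero])

theorem basis_eq_ofCoords {v : Basis (Fin 6) R S} (hv : ⇑v = monomials a b) (i : Fin 6) :
    v i = ofCoords R a b (Pi.single i 1) := by
  rw [hv, ofCoords, Fintype.linearCombination_apply_single, one_smul]

theorem leftMulMatrix_ofCoords (h : RootPair a b) {v : Basis (Fin 6) R S}
    (hv : ⇑v = monomials a b) (c : Fin 6 → R) :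
    Algebra.leftMulMatrix v (ofCoords R a b c) = mulMatrix c := by
  ext i j
  rw [Algebra.leftMulMatrix_eq_repr_mul, ← v.equivFun_apply, basis_eq_ofCoords hv, h.ofCoords_mul,
    equivFun_ofCoords hv, mulVec_single_one, col_apply]

theorem norm_ofCoords (h : RootPair a b) {v : Basis (Fin 6) R S} (hv : ⇑v = monomials a b)
    (c : Fin 6 → R) : Algebra.norm R (ofCoords R a b c) = normForm c := by
  rw [Algebra.norm_eq_matrix_det v, h.leftMulMatrix_ofCoords hv, det_mulMatrix]

theorem trace_ofCoords (h : RootPair a b) {v : Basis (Fin 6) R S} (hv : ⇑v = monomials a b)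
    (c : Fin 6 → R) : Algebra.trace R S (ofCoords R a b c) = 6 * c 0 + 3 * c 1 := by
  rw [Algebra.trace_eq_matrix_trace v, h.leftMulMatrix_ofCoords hv]
  simp only [Matrix.trace, diag_apply, mulMatrix, Fin.sum_univ_six, of_apply, cons_val]
  ring

/-- The Gram matrix of the trace form with respect to the monomials. -/
def traceGram (R : Type*) [CommRing R] : Matrix (Fin 6) (Fin 6) R :=
  !![6, 3, 0, 0, 0, 0; 3, -45, 0, 0, 0, 0; 0, 0, 0, 0, 12, 3;
     0, 0, 0, 0, 3, 24; 0, 0, 12, 3, 0, 0; 0, 0, 3, 24, 0, 0]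

theorem traceMatrix_eq (h : RootPair a b) {v : Basis (Fin 6) R S} (hv : ⇑v = monomials a b) :
    Algebra.traceMatrix R v = traceGram R := by
  ext i j
  rw [Algebra.traceMatrix_apply, Algebra.traceForm_apply, basis_eq_ofCoords hv,
    basis_eq_ofCoords hv, h.ofCoords_mul, h.trace_ofCoords hv, mulVec_single_one]
  fin_cases i <;> fin_cases j <;> simp [mulMatrix, traceGram] <;> norm_num

theorem discr_eq (h : RootPair a b) {v : Basis (Fin 6) R S} (hv : ⇑v = monomials a b) :
    Algebra.discr R v = -279 ^ 3 := by
  rw [Algebra.discr_def, h.traceMatrix_eq hv]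
  simp [traceGram, det_succ_row_zero, Fin.sum_univ_succ, Fin.succAbove]
  norm_num

end Basis

end RootPair

open Polynomial in
theorem natDegree_dvd_finrank_of_forall_not_isRoot {k L : Type*} [Field k] [Field L] [Algebra k L]
    {f : k[X]} (hf : f.Monic) (hdeg : f.natDegree ∈ Finset.Icc 1 3) (hroot : ∀ r, ¬f.IsRoot r)
    {x : L} (hx : aeval x f = 0) : f.natDegree ∣ finrank k L := by
  have hirr : Irreducible f := irreducible_of_degree_le_three_of_not_isRoot hdeg hroot
  rw [minpoly.eq_of_irreducible_of_monic hirr hx hf]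
  exact minpoly.degree_dvd ⟨f, hf, hx⟩

theorem cube_sub_six_mul_sub_one_ne_zero (r : ℚ) : r ^ 3 - 6 * r - 1 ≠ 0 := by
  intro hr
  have hint : IsIntegral ℤ r :=
    ⟨Polynomial.X ^ 3 - Polynomial.C 6 * Polynomial.X - 1, by monicity!, by simpa using hr⟩
  obtain ⟨n, rfl⟩ := IsIntegrallyClosed.isIntegral_iff.mp hint
  rw [eq_intCast] at hr
  have hn : n * (n ^ 2 - 6) = 1 := by
    have : n ^ 3 - 6 * n - 1 = 0 := by exact_mod_cast hr
    linear_combination this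
  rcases Int.eq_one_or_neg_one_of_mul_eq_one hn with rfl | rfl <;> norm_num at hn

namespace RootPair

section Degree

variable {k L : Type*} [Field k] [Field L] [Algebra k L] {a b : L}

open Polynomial

theorem two_dvd_finrank (h : RootPair a b) (hk : ∀ r : k, r ^ 2 - r + 8 ≠ 0) :
    2 ∣ finrank k L := by
  have hdeg : (X ^ 2 - X + C 8 : k[X]).natDegree = 2 := by compute_degree!
  rw [← hdeg]
  refine natDegree_dvd_finrank_of_forall_not_isRoot (x := a ^ 3) (by monicity!) (by simp [hdeg])
    (fun r hr => hk r (by simpa using hr)) ?_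
  simpa [map_ofNat] using h.cube_sq_sub_cube_add_eight

theorem three_dvd_finrank (h : RootPair a b) (hk : ∀ r : k, r ^ 3 - 6 * r - 1 ≠ 0) :
    3 ∣ finrank k L := by
  have hdeg : (X ^ 3 - C 6 * X - 1 : k[X]).natDegree = 3 := by compute_degree!
  rw [← hdeg]
  refine natDegree_dvd_finrank_of_forall_not_isRoot (x := a + b) (by monicity!) (by simp [hdeg])
    (fun r hr => hk r (by simpa using hr)) ?_
  simpa [map_ofNat] using h.add_cube_sub_six_mul_sub_one

theorem finrank_rat_eq_six {K : Type*} [Field K] [Algebra ℚ K] {a b : K} (h : RootPair a b)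
    (htop : Algebra.adjoin ℚ {a, b} = ⊤) : finrank ℚ K = 6 := by
  have hspan : Submodule.span ℚ (Set.range (monomials a b)) = ⊤ := by
    rw [h.span_monomials, htop, Algebra.top_toSubmodule]
  have : Module.Finite ℚ K := ⟨hspan ▸ Submodule.fg_span (Set.finite_range _)⟩
  have hle : finrank ℚ K ≤ 6 := by simpa using finrank_le_of_span_eq_top hspan
  have h2 : 2 ∣ finrank ℚ K := h.two_dvd_finrank fun r => by nlinarith [sq_nonneg (2 * r - 1)]
  have h3 : 3 ∣ finrank ℚ K := h.three_dvd_finrank cube_sub_six_mul_sub_one_ne_zero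
  have hpos : 0 < finrank ℚ K := finrank_pos
  omega

theorem exists_basis_rat {K : Type*} [Field K] [Algebra ℚ K] {a b : K} (h : RootPair a b)
    (htop : Algebra.adjoin ℚ {a, b} = ⊤) : ∃ v : Basis (Fin 6) ℚ K, ⇑v = monomials a b := by
  have hspan : ⊤ ≤ Submodule.span ℚ (Set.range (monomials a b)) := by
    rw [h.span_monomials, htop, Algebra.top_toSubmodule]
  exact ⟨basisOfTopLeSpanOfCardEqFinrank _ hspan (by simp [h.finrank_rat_eq_six htop]),
    coe_basisOfTopLeSpanOfCardEqFinrank _ _ _⟩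

end Degree

end RootPair

theorem smul_mem_span_of_mul_traceMatrix_eq {R k L ι : Type*} [CommRing R]
    [IsIntegrallyClosed R] [Field k] [Algebra R k] [IsFractionRing R k] [Field L] [Algebra k L]
    [Algebra R L] [IsScalarTower R k L] [Fintype ι] [DecidableEq ι] {v : Basis ι k L}
    (hv : ∀ i, IsIntegral R (v i)) (U : Matrix ι ι R) (d : R)
    (hU : U.map (algebraMap R k) * Algebra.traceMatrix k v = (algebraMap R k d) • 1)
    {z : L} (hz : IsIntegral R z) : d • z ∈ Submodule.span R (Set.range v) := by
  have : FiniteDimensional k L := v.finiteDimensional_of_finite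
  have htrace (i : ι) : ∃ r, algebraMap R k r = Algebra.trace k L (z * v i) :=
    IsIntegrallyClosed.isIntegral_iff.mp (Algebra.isIntegral_trace (hz.mul (hv i)))
  choose t ht using htrace
  have hcoord : algebraMap R k d • v.equivFun z = algebraMap R k ∘ (U *ᵥ t) := by
    have := congrArg (U.map (algebraMap R k) *ᵥ ·) (Algebra.traceMatrix_of_basis_mulVec v z)
    simp only [mulVec_mulVec, hU, smul_mulVec, one_mulVec, ← ht] at this
    rw [this]
    exact (funext (RingHom.map_mulVec (algebraMap R k) U t)).symm
  have hsum : d • z = ∑ i, (U *ᵥ t) i • v i := by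
    rw [← algebraMap_smul k d z, ← v.sum_equivFun (algebraMap R k d • z), map_smul, hcoord]
    simp
  rw [hsum]
  exact Submodule.sum_mem _ fun i _ => Submodule.smul_mem _ _ (Submodule.subset_span ⟨i, rfl⟩)

/-- A radical element is not a genuine denominator: if `π z` lies in `R` then integrality of `z`
makes `π z` nilpotent modulo `π`. -/
theorem mem_range_of_radical_smul_mem_range {R A : Type*} [CommRing R] [IsDomain R] [CommRing A]
    [Nontrivial A] [Algebra R A] [IsTorsionFree R A] {π : R} (hπ : IsRadical π) (h0 : π ≠ 0)
    {z : A} (hz : IsIntegral R z) (hmem : π • z ∈ Set.range (algebraMap R A)) :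
    z ∈ Set.range (algebraMap R A) := by
  obtain ⟨p, hp, hpz⟩ := hz
  obtain ⟨y, hy⟩ := hmem
  have hdvd : π ∣ y ^ p.natDegree :=
    Polynomial.dvd_pow_natDegree_of_aeval_eq_zero hp π y z hpz
      (by rw [hy, mul_comm, Algebra.smul_def])
  obtain ⟨q, rfl⟩ := hπ _ _ hdvd
  refine ⟨q, ?_⟩
  rw [map_mul, ← Algebra.smul_def] at hy
  exact smul_right_injective A h0 hy

theorem mem_range_of_radical_pow_smul_mem_range {R A : Type*} [CommRing R] [IsDomain R]
    [CommRing A] [Nontrivial A] [Algebra R A] [IsTorsionFree R A] {π : R} (hπ : IsRadical π)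
    (h0 : π ≠ 0) {z : A} (hz : IsIntegral R z) (n : ℕ)
    (hmem : π ^ n • z ∈ Set.range (algebraMap R A)) : z ∈ Set.range (algebraMap R A) := by
  induction n with
  | zero => simpa using hmem
  | succ n ih =>
    rw [pow_succ', mul_smul] at hmem
    exact ih (mem_range_of_radical_smul_mem_range hπ h0 (hz.smul (π ^ n)) hmem)

namespace RootPair

section Radical

variable {S : Type*} [CommRing S] {a b : S}

theorem natCast_dvd_ofCoords_iff {v : Basis (Fin 6) ℤ S} (hv : ⇑v = monomials a b) (p : ℕ)
    (c : Fin 6 → ℤ) : (p : S) ∣ ofCoords ℤ a b c ↔ Int.castRingHom (ZMod p) ∘ c = 0 := by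
  constructor
  · rintro ⟨y, hy⟩
    have hc : c = (p : ℤ) • v.equivFun y := by
      rw [← equivFun_ofCoords hv c, hy, ← map_smul, zsmul_eq_mul, Int.cast_natCast]
    ext i
    simp [hc]
  · intro hc
    have hdvd (i : Fin 6) : (p : ℤ) ∣ c i :=
      (ZMod.intCast_zmod_eq_zero_iff_dvd _ _).1 (congrFun hc i)
    choose d hd using hdvd
    refine ⟨ofCoords ℤ a b d, ?_⟩
    rw [(funext hd : c = (p : ℤ) • d), map_smul, zsmul_eq_mul, Int.cast_natCast]

theorem ofCoords_dvd_ofCoords_iff (h : RootPair a b) {v : Basis (Fin 6) ℤ S}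
    (hv : ⇑v = monomials a b) {p : ℕ} [NeZero p] {w w' : Fin 6 → ℤ}
    (hw : ofCoords ℤ a b w * ofCoords ℤ a b w' = p) (c : Fin 6 → ℤ) :
    ofCoords ℤ a b w ∣ ofCoords ℤ a b c ↔
      mulMatrix (Int.castRingHom (ZMod p) ∘ w') *ᵥ (Int.castRingHom (ZMod p) ∘ c) = 0 := by
  have hdvd : ofCoords ℤ a b w ∣ ofCoords ℤ a b c ↔
      (p : S) ∣ ofCoords ℤ a b w' * ofCoords ℤ a b c := by
    constructor
    · rintro ⟨y, hy⟩
      exact ⟨y, by rw [hy, ← hw]; ring⟩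
    · rintro ⟨y, hy⟩
      have := Module.Free.of_basis v
      have hp : (p : ℤ) ≠ 0 := Nat.cast_ne_zero.2 (NeZero.ne p)
      refine ⟨y, smul_right_injective S hp ?_⟩
      simp only [zsmul_eq_mul, Int.cast_natCast]
      linear_combination (ofCoords ℤ a b w) * hy - (ofCoords ℤ a b c) * hw
  rw [hdvd, h.ofCoords_mul, natCast_dvd_ofCoords_iff hv, map_mulMatrix_mulVec]

/-- Divisibility by a divisor of `p` can be tested on the coordinates modulo `p`, so that radicality
becomes a statement about `ZMod p`. -/
theorem isRadical_ofCoords (h : RootPair a b) {v : Basis (Fin 6) ℤ S}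
    (hv : ⇑v = monomials a b) {p : ℕ} [NeZero p] {w w' : Fin 6 → ℤ}
    (hw : ofCoords ℤ a b w * ofCoords ℤ a b w' = p)
    (hred : ∀ c : Fin 6 → ZMod p,
      mulMatrix (Int.castRingHom (ZMod p) ∘ w') *ᵥ (mulMatrix c *ᵥ c) = 0 →
        mulMatrix (Int.castRingHom (ZMod p) ∘ w') *ᵥ c = 0) :
    IsRadical (ofCoords ℤ a b w) := by
  rw [isRadical_iff_pow_one_lt 2 one_lt_two]
  intro x hx
  obtain ⟨c, rfl⟩ : ∃ c, ofCoords ℤ a b c = x := ⟨v.equivFun x, ofCoords_equivFun hv x⟩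
  rw [pow_two, h.ofCoords_mul, h.ofCoords_dvd_ofCoords_iff hv hw, map_mulMatrix_mulVec] at hx
  exact (h.ofCoords_dvd_ofCoords_iff hv hw c).2 (hred _ hx)

theorem mulMatrix_mulVec_eq_zero_of_sq_zmod3 : ∀ c : Fin 6 → ZMod 3,
    mulMatrix (![-2, 0, 2, -1, 2, -1]) *ᵥ (mulMatrix c *ᵥ c) = 0 →
      mulMatrix (![-2, 0, 2, -1, 2, -1]) *ᵥ c = 0 := by
  decide +kernel

theorem eq_zero_of_quadratic_system {F : Type*} [Field F] (h20 : (20 : F) ≠ 0) {p q r : F}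
    (hpp : p ^ 2 + 4 * (q * r) = 0) (hpq : p * q + 4 * r ^ 2 = 0)
    (hpr : p * r + 4 * q ^ 2 = 0) : p = 0 ∧ q = 0 ∧ r = 0 := by
  have h4 : (4 : F) ≠ 0 := fun h => h20 (by linear_combination 5 * h)
  have hqr : q * r = 0 := by
    have : 20 * (q * r) ^ 2 = 0 := by
      linear_combination q * r * hpp - q * p * hpr + 4 * q ^ 2 * hpq
    simpa [h20] using this
  have hp : p = 0 := by simpa [hqr] using hpp
  exact ⟨hp, by simpa [hp, h4] using hpr, by simpa [hp, h4] using hpq⟩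

theorem mulMatrix_mulVec_eq_zero_iff_zmod31 (c : Fin 6 → ZMod 31) :
    mulMatrix ![1, -2, 0, 0, 0, 0] *ᵥ c = 0 ↔
      c 0 + 16 * c 1 = 0 ∧ c 2 + 8 * c 3 = 0 ∧ c 4 + 8 * c 5 = 0 := by
  have h31 : (31 : ZMod 31) = 0 := rfl
  have key : mulMatrix ![1, -2, 0, 0, 0, 0] *ᵥ c =
      ![c 0 + 16 * c 1, -2 * (c 0 + 16 * c 1), -(c 2 + 8 * c 3), 4 * (c 2 + 8 * c 3),
        c 4 + 8 * c 5, -4 * (c 4 + 8 * c 5)] := by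
    ext i
    fin_cases i <;> simp [mulMatrix, mulVec, dotProduct, Fin.sum_univ_six]
    · ring
    · linear_combination c 1 * h31
    · ring
    · linear_combination (-c 3) * h31
    · ring
    · linear_combination c 5 * h31
  rw [key]
  constructor
  · intro h
    exact ⟨congrFun h 0, neg_eq_zero.1 (congrFun h 2), congrFun h 4⟩
  · rintro ⟨h0, h2, h4⟩
    simp [h0, h2, h4]

theorem mulMatrix_mulVec_eq_zero_of_sq_zmod31 (c : Fin 6 → ZMod 31)
    (hc : mulMatrix ![1, -2, 0, 0, 0, 0] *ᵥ (mulMatrix c *ᵥ c) = 0) :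
    mulMatrix ![1, -2, 0, 0, 0, 0] *ᵥ c = 0 := by
  have h20 : (20 : ZMod 31) ≠ 0 := by decide
  have : Fact (Nat.Prime 31) := ⟨by norm_num⟩
  have h31 : (31 : ZMod 31) = 0 := rfl
  rw [mulMatrix_mulVec_eq_zero_iff_zmod31] at hc ⊢
  simp only [mulMatrix, mulVec, dotProduct, Fin.sum_univ_six, of_apply, cons_val] at hc
  obtain ⟨h0, h2, h4⟩ := hc
  apply eq_zero_of_quadratic_system h20
  · linear_combination h0 + (8 * c 1 ^ 2 + 2 * c 3 * c 4 + 8 * c 3 * c 5) * h31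
  · linear_combination 16 * h2 +
      (16 * c 1 * c 2 - c 0 * c 2 - 8 * c 0 * c 3 - 4 * c 4 ^ 2 + 16 * c 5 ^ 2) * h31
  · linear_combination 16 * h4 +
      (16 * c 3 ^ 2 - c 0 * c 4 - 8 * c 0 * c 5 - 16 * c 1 * c 4 - 4 * c 2 ^ 2) * h31

theorem isRadical_add_add_two (h : RootPair a b) {v : Basis (Fin 6) ℤ S}
    (hv : ⇑v = monomials a b) : IsRadical (a + b + 2) := by
  rw [← ofCoords_eq_add_add_two]
  refine h.isRadical_ofCoords hv (p := 3) (w' := ![-2, 0, 2, -1, 2, -1]) ?_ ?_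
  · rw [h.ofCoords_mul, ← map_natCast (algebraMap ℤ S)]
    simp [mulMatrix, ofCoords_apply]
  · have : Int.castRingHom (ZMod 3) ∘ ![-2, 0, 2, -1, 2, -1] = ![-2, 0, 2, -1, 2, -1] := by decide
    rw [this]
    exact mulMatrix_mulVec_eq_zero_of_sq_zmod3

theorem isRadical_two_mul_cube_sub_one (h : RootPair a b) {v : Basis (Fin 6) ℤ S}
    (hv : ⇑v = monomials a b) : IsRadical (2 * a ^ 3 - 1) := by
  rw [← ofCoords_eq_two_mul_cube_sub_one a b]
  refine h.isRadical_ofCoords hv (p := 31) (w' := ![1, -2, 0, 0, 0, 0]) ?_ ?_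
  · rw [h.ofCoords_mul, ← map_natCast (algebraMap ℤ S)]
    simp [mulMatrix, ofCoords_apply]
  · have : Int.castRingHom (ZMod 31) ∘ ![1, -2, 0, 0, 0, 0] = ![1, -2, 0, 0, 0, 0] := by decide
    rw [this]
    exact mulMatrix_mulVec_eq_zero_of_sq_zmod31

end Radical


section RingOfIntegers

theorem exists_basis_adjoin {R S : Type*} [CommRing R] [CommRing S] [Algebra R S] {a b : S}
    (h : RootPair a b) (hli : LinearIndependent R (monomials a b)) :
    ∃ (a' b' : Algebra.adjoin R {a, b}) (v : Basis (Fin 6) R (Algebra.adjoin R {a, b})),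
      RootPair a' b' ∧ ⇑v = monomials a' b' := by
  let a' : Algebra.adjoin R {a, b} := ⟨a, Algebra.subset_adjoin (by simp)⟩
  let b' : Algebra.adjoin R {a, b} := ⟨b, Algebra.subset_adjoin (by simp)⟩
  let v := (Basis.span hli).map (LinearEquiv.ofEq _ _ h.span_monomials)
  refine ⟨a', b', v, .of_map (f := (Algebra.adjoin R {a, b}).val.toRingHom)
    Subtype.val_injective h, ?_⟩
  ext i
  simp only [v, Basis.map_apply, LinearEquiv.coe_ofEq_apply, Basis.span_apply]
  fin_cases i <;> rfl

theorem isIntegral {S : Type*} [CommRing S] {a b : S} (h : RootPair a b) : IsIntegral ℤ a :=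
  ⟨Polynomial.X ^ 6 - Polynomial.X ^ 3 + Polynomial.C 8, by monicity!, by
    simpa [map_ofNat] using h.sextic_eq_zero⟩

theorem isIntegral_monomials {S : Type*} [CommRing S] {a b : S} (h : RootPair a b) (i : Fin 6) :
    IsIntegral ℤ (monomials a b i) := by
  have ha := h.isIntegral
  have hb := h.symm.isIntegral
  fin_cases i
  exacts [isIntegral_one, ha.pow 3, ha, hb.pow 2, hb, ha.pow 2]

/-- `93` times the inverse of the trace Gram matrix. -/
def traceGramAdj : Matrix (Fin 6) (Fin 6) ℤ :=
  !![15, 1, 0, 0, 0, 0; 1, -2, 0, 0, 0, 0; 0, 0, 0, 0, 8, -1;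
     0, 0, 0, 0, -1, 4; 0, 0, 8, -1, 0, 0; 0, 0, -1, 4, 0, 0]

theorem traceGramAdj_mul_traceGram :
    traceGramAdj.map (algebraMap ℤ ℚ) * traceGram ℚ = (algebraMap ℤ ℚ 93) • 1 := by
  ext i j
  fin_cases i <;> fin_cases j <;>
    simp [traceGramAdj, traceGram, mul_apply, Fin.sum_univ_six] <;> norm_num

variable {K : Type*} [Field K] [Algebra ℚ K] {a b : K}

theorem smul_mem_adjoin (h : RootPair a b) {v : Basis (Fin 6) ℚ K} (hv : ⇑v = monomials a b)
    {z : K} (hz : IsIntegral ℤ z) : (93 : ℤ) • z ∈ Algebra.adjoin ℤ {a, b} := by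
  rw [← Subalgebra.mem_toSubmodule, ← h.span_monomials, ← hv]
  refine smul_mem_span_of_mul_traceMatrix_eq (fun i => ?_) traceGramAdj 93 ?_ hz
  · rw [hv]; exact h.isIntegral_monomials i
  · rw [h.traceMatrix_eq hv, traceGramAdj_mul_traceGram]

/-- The trace form leaves `93 = 3 · 31` as the only possible denominator. Up to sign `31` is the
square of `2a³ - 1`, and `3` divides the cube of `a + b + 2`. -/
theorem mem_adjoin_of_isIntegral (h : RootPair a b) {v : Basis (Fin 6) ℚ K}
    (hv : ⇑v = monomials a b) {z : K} (hz : IsIntegral ℤ z) :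
    z ∈ Algebra.adjoin ℤ {a, b} := by
  have := algebraRat.charZero K
  have hli : LinearIndependent ℤ (monomials a b) :=
    hv ▸ v.linearIndependent.restrict_scalars' ℤ
  obtain ⟨a', b', w, h', hw⟩ := h.exists_basis_adjoin hli
  have hmem (x : K) : x ∈ Algebra.adjoin ℤ {a, b} ↔
      x ∈ Set.range (algebraMap (Algebra.adjoin ℤ {a, b}) K) := by
    simp [Subalgebra.algebraMap_eq]
  obtain ⟨y, hy⟩ := (hmem _).1 (h.smul_mem_adjoin hv hz)
  obtain ⟨x, hx⟩ : (3 : ℤ) • z ∈ Set.range (algebraMap (Algebra.adjoin ℤ {a, b}) K) := by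
    refine mem_range_of_radical_pow_smul_mem_range (h'.isRadical_two_mul_cube_sub_one hw) ?_
      (hz.smul (3 : ℤ)).tower_top 2 ⟨-y, ?_⟩
    · rw [← ofCoords_eq_two_mul_cube_sub_one a' b']
      exact ofCoords_ne_zero hw (by decide)
    · rw [h'.two_mul_cube_sub_one_sq, Algebra.smul_def, map_neg, map_neg, hy, map_ofNat,
        ofNat_zsmul, ofNat_zsmul, nsmul_eq_mul, nsmul_eq_mul]
      ring
  rw [hmem]
  refine mem_range_of_radical_pow_smul_mem_range (h'.isRadical_add_add_two hw) ?_
    hz.tower_top 3 ⟨(2 * (a' + b') ^ 2 + 6 * (a' + b') + 3) * x, ?_⟩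
  · rw [← ofCoords_eq_add_add_two]
    exact ofCoords_ne_zero hw (by decide)
  · rw [h'.add_add_two_cube, Algebra.smul_def, map_mul, map_mul, map_ofNat, hx, zsmul_eq_mul,
      Int.cast_ofNat]
    ring

theorem adjoin_eq_integralClosure (h : RootPair a b) {v : Basis (Fin 6) ℚ K}
    (hv : ⇑v = monomials a b) : Algebra.adjoin ℤ {a, b} = integralClosure ℤ K := by
  refine le_antisymm (Algebra.adjoin_le ?_) fun z hz => h.mem_adjoin_of_isIntegral hv hz
  rintro x (rfl | rfl)
  exacts [h.isIntegral, h.symm.isIntegral]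

theorem exists_basis_integralClosure (h : RootPair a b) {v : Basis (Fin 6) ℚ K}
    (hv : ⇑v = monomials a b) :
    ∃ (a' b' : integralClosure ℤ K) (w : Basis (Fin 6) ℤ (integralClosure ℤ K)),
      RootPair a' b' ∧ ⇑w = monomials a' b' := by
  have := algebraRat.charZero K
  rw [← h.adjoin_eq_integralClosure hv]
  exact h.exists_basis_adjoin (hv ▸ v.linearIndependent.restrict_scalars' ℤ)

end RingOfIntegers

end RootPair

theorem span_pair_pow_three_eq_span_singleton {O : Type*} [CommRing O] {x c d p q r : O}
    (hd : x ^ 3 = c * d) (hone : p * d + q * x ^ 2 + r * c ^ 2 = 1) :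
    Ideal.span {x, c} ^ 3 = Ideal.span {c} := by
  have hdiv : Ideal.span {x} ^ 3 = Ideal.span {c} * Ideal.span {d} := by
    rw [Ideal.span_singleton_pow, hd, Ideal.span_singleton_mul_span_singleton]
  have htop : Ideal.span {d} + (3 * Ideal.span {x} ^ 2 + 3 * Ideal.span {x} * Ideal.span {c}
      + Ideal.span {c} ^ 2) = 1 := by
    rw [ofNat_eq_one, one_mul, one_mul, Ideal.span_singleton_pow, Ideal.span_singleton_pow,
      Ideal.one_eq_top, Ideal.eq_top_iff_one, ← hone]
    simp only [Ideal.add_eq_sup]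
    refine add_mem (add_mem (Ideal.mem_sup_left ?_)
      (Ideal.mem_sup_right (Ideal.mem_sup_left (Ideal.mem_sup_left ?_))))
      (Ideal.mem_sup_right (Ideal.mem_sup_right ?_))
    all_goals exact Ideal.mul_mem_left _ _ (Ideal.mem_span_singleton_self _)
  calc Ideal.span {x, c} ^ 3 = (Ideal.span {x} + Ideal.span {c}) ^ 3 := by
        rw [Ideal.span_insert, Ideal.add_eq_sup]
    _ = Ideal.span {x} ^ 3 + Ideal.span {c} * (3 * Ideal.span {x} ^ 2
          + 3 * Ideal.span {x} * Ideal.span {c} + Ideal.span {c} ^ 2) := by ring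
    _ = Ideal.span {c} := by rw [hdiv, ← mul_add, htop, mul_one]

namespace RootPair

theorem span_two_sub_one_mul {S : Type*} [CommRing S] {a b : S} (h : RootPair a b) :
    Ideal.span {2, a - 1} * Ideal.span {2, b - 1} =
      Ideal.span {a ^ 2 + b ^ 2 - a - b} := by
  have h2 := h.mul_eq_two
  have hs := h.add_cube_sub_six_mul_sub_one
  have htwo : a ^ 2 + b ^ 2 - a - b ∣ 2 :=
    ⟨-(1 + 3 * (a + b) + (a + b) ^ 2), by
      linear_combination (a + b + 2) * hs - 2 * (1 + 3 * (a + b) + (a + b) ^ 2) * h2⟩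
  have hprod : a ^ 2 + b ^ 2 - a - b ∣ (a - 1) * (b - 1) :=
    ⟨-(1 + (a + b)), by linear_combination hs + (1 - 2 * (1 + (a + b))) * h2⟩
  rw [Ideal.span_pair_mul_span_pair]
  apply le_antisymm
  · rw [Ideal.span_le]
    rintro y (rfl | rfl | rfl | rfl)
    all_goals simp only [SetLike.mem_coe, Ideal.mem_span_singleton]
    exacts [htwo.mul_left _, htwo.mul_right _, htwo.mul_left _, hprod]
  · have hcomb : a ^ 2 + b ^ 2 - a - b =
        (a - 1) * 2 + -(a + b) * ((a - 1) * (b - 1)) + 2 * (b - 1) := by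
      linear_combination (a + b - 2) * h2
    rw [Ideal.span_singleton_le_iff_mem, hcomb]
    refine add_mem (add_mem ?_ (Ideal.mul_mem_left _ _ ?_)) ?_ <;>
      exact Ideal.subset_span (by simp)

theorem span_two_sub_one_pow_three {S : Type*} [CommRing S] {a b : S} (h : RootPair a b) :
    Ideal.span {2, b - 1} ^ 3 = Ideal.span {b - 1} := by
  have h6 := h.symm.sextic_eq_zero
  refine span_pair_pow_three_eq_span_singleton (d := -b ^ 3 * (b ^ 2 + b + 1))
    (p := -(-b ^ 3 * (b ^ 2 + b + 1) + 6)) (q := -2)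
    (r := (b ^ 4 + 2 * b ^ 3 + 3 * b ^ 2 + 3 * b + 3) ^ 2) ?_ ?_
  · linear_combination h6
  · ring

end RootPair

section

variable {O : Type*} [CommRing O] [IsDedekindDomain O]

theorem mk0_mem_of_mul_eq_span_singleton (H : Subgroup (ClassGroup O)) {I J : (Ideal O)⁰} {x : O}
    (hIJ : (I * J : Ideal O) = Ideal.span {x}) (hJ : ClassGroup.mk0 J ∈ H) :
    ClassGroup.mk0 I ∈ H := by
  have h0 : x ≠ 0 := by
    rintro rfl
    exact nonZeroDivisors.coe_ne_zero (I * J) (by simpa using hIJ)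
  rw [ClassGroup.mk0_eq_mk0_inv_iff.mpr ⟨x, h0, hIJ⟩]
  exact inv_mem hJ

variable [Module.Free ℤ O]

-- The cofactor of `P` in the principal ideal `(x)` has smaller norm than `P`.
theorem mk0_mem_of_absNorm_span_lt_sq (H : Subgroup (ClassGroup O)) {P : (Ideal O)⁰} {x : O}
    (hx : x ∈ (P : Ideal O)) (h0 : x ≠ 0)
    (hlt : Ideal.absNorm (Ideal.span {x}) < Ideal.absNorm (P : Ideal O) ^ 2)
    (ih : ∀ J : (Ideal O)⁰, Ideal.absNorm (J : Ideal O) < Ideal.absNorm (P : Ideal O) →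
      ClassGroup.mk0 J ∈ H) :
    ClassGroup.mk0 P ∈ H := by
  obtain ⟨J, hJ⟩ := Ideal.dvd_span_singleton.mpr hx
  have hJ0 : J ≠ 0 := by
    rintro rfl
    exact h0 (by simpa using hJ)
  refine mk0_mem_of_mul_eq_span_singleton H (J := ⟨J, mem_nonZeroDivisors_of_ne_zero hJ0⟩)
    hJ.symm (ih _ ?_)
  rw [hJ, map_mul, sq] at hlt
  exact Nat.lt_of_mul_lt_mul_left hlt

variable [Module.Finite ℤ O]

theorem one_lt_absNorm_of_ne_top {I : (Ideal O)⁰} (hI : (I : Ideal O) ≠ ⊤) :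
    1 < Ideal.absNorm (I : Ideal O) :=
  Nat.one_lt_iff_ne_zero_and_ne_one.2
    ⟨Ideal.absNorm_ne_zero_of_nonZeroDivisors I, fun h => hI (Ideal.absNorm_eq_one_iff.1 h)⟩

theorem mk0_mem_of_forall_isPrime (H : Subgroup (ClassGroup O)) (B : ℕ)
    (hprime : ∀ P : (Ideal O)⁰, (P : Ideal O).IsPrime → Ideal.absNorm (P : Ideal O) ≤ B →
      ClassGroup.mk0 P ∈ H ∨ ∃ x ∈ (P : Ideal O), x ≠ 0 ∧
        Ideal.absNorm (Ideal.span {x}) < Ideal.absNorm (P : Ideal O) ^ 2)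
    (I : (Ideal O)⁰) (hI : Ideal.absNorm (I : Ideal O) ≤ B) : ClassGroup.mk0 I ∈ H := by
  induction hm : Ideal.absNorm (I : Ideal O) using Nat.strong_induction_on generalizing I with
  | _ m ih =>
  subst hm
  have ih' (J : (Ideal O)⁰) (hJ : Ideal.absNorm (J : Ideal O) < Ideal.absNorm (I : Ideal O)) :
      ClassGroup.mk0 J ∈ H := ih _ hJ J (hJ.le.trans hI) rfl
  by_cases htop : (I : Ideal O) = ⊤
  · have : I = 1 := Subtype.ext (htop.trans Ideal.one_eq_top.symm)
    rw [this, map_one]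
    exact one_mem H
  obtain ⟨M, hM, hIM⟩ := Ideal.exists_le_maximal _ htop
  obtain ⟨J, hJ⟩ := Ideal.dvd_iff_le.mpr hIM
  have hMJ : M * J ≠ 0 := hJ ▸ nonZeroDivisors.coe_ne_zero I
  lift M to (Ideal O)⁰ using mem_nonZeroDivisors_of_ne_zero (left_ne_zero_of_mul hMJ)
  lift J to (Ideal O)⁰ using mem_nonZeroDivisors_of_ne_zero (right_ne_zero_of_mul hMJ)
  obtain rfl : I = M * J := Subtype.ext hJ
  by_cases hJtop : (J : Ideal O) = ⊤
  · obtain rfl : J = 1 := Subtype.ext (hJtop.trans Ideal.one_eq_top.symm)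
    rw [mul_one] at *
    rcases hprime M hM.isPrime hI with hmem | ⟨x, hx, h0, hlt⟩
    · exact hmem
    · exact mk0_mem_of_absNorm_span_lt_sq H hx h0 hlt ih'
  · have hM1 := one_lt_absNorm_of_ne_top hM.ne_top
    have hJ1 := one_lt_absNorm_of_ne_top hJtop
    rw [Submonoid.coe_mul, map_mul] at ih'
    rw [map_mul]
    exact mul_mem (ih' M (lt_mul_of_one_lt_right (by positivity) hJ1))
      (ih' J (lt_mul_of_one_lt_left (by positivity) hM1))

end

/-- Coordinates of elements of small norm, found by a search among coefficients in
`{-1, 0, 1}`: every prime ideal of degree one and odd norm at most `148` contains one of them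
whose norm is less than the square of the norm of the ideal. -/
def smallCoords : List (Fin 6 → ℤ) := [
  ![0, 0, 0, 1, 0, -1], ![0, 1, 0, -1, 0, 0], ![0, 1, 0, 0, -1, 0], ![1, 0, 0, 0, 1, 0],
  ![1, 0, 1, 0, 0, 0], ![0, 0, 0, 1, -1, -1], ![0, 0, 0, 1, -1, 1], ![0, 0, 0, 1, 1, -1],
  ![0, 0, 0, 1, 1, 1], ![0, 0, 1, -1, 0, 1], ![0, 0, 1, -1, 1, 0], ![0, 0, 1, 0, 1, -1],
  ![0, 0, 1, 0, 1, 1], ![0, 0, 1, 1, 0, -1], ![0, 0, 1, 1, 0, 1], ![0, 0, 1, 1, 1, 0],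
  ![0, 1, 0, -1, 0, 1], ![0, 1, 0, 0, -1, 1], ![1, -1, -1, 0, 0, 0], ![1, 0, -1, -1, 0, 0],
  ![0, 0, 1, -1, -1, -1], ![0, 0, 1, 1, -1, 1], ![0, 1, 0, 1, 1, -1], ![0, 1, 1, 0, -1, -1],
  ![0, 1, 1, 1, -1, 0], ![0, 1, -1, -1, 0, 1], ![1, -1, -1, 1, 0, 0]]

theorem exists_mem_smallCoords : ∀ p : Fin 149, 2 < p.val → p.val.Prime →
    ∀ k : Fin p, (p : ℤ) ∣ (k : ℤ) ^ 6 - (k : ℤ) ^ 3 + 8 →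
    ∀ l : Fin p, (p : ℤ) ∣ (k : ℤ) * l - 2 →
      ∃ n ∈ smallCoords, (p : ℤ) ∣ ofCoords ℤ (k : ℤ) (l : ℤ) n ∧
        0 < normForm n ∧ normForm n < p ^ 2 := by
  decide +kernel

namespace RootPair

theorem exists_ofCoords_eq_zero_of_prime {p : ℕ} [Fact p.Prime] (hp : 2 < p) (hle : p ≤ 148)
    {x y : ZMod p} (h : RootPair x y) :
    ∃ n : Fin 6 → ℤ, ofCoords ℤ x y n = 0 ∧ 0 < normForm n ∧ normForm n < p ^ 2 := by
  have hsextic : (p : ℤ) ∣ (x.val : ℤ) ^ 6 - (x.val : ℤ) ^ 3 + 8 := by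
    rw [← ZMod.intCast_zmod_eq_zero_iff_dvd]
    push_cast
    simpa using h.sextic_eq_zero
  have hmul : (p : ℤ) ∣ (x.val : ℤ) * y.val - 2 := by
    rw [← ZMod.intCast_zmod_eq_zero_iff_dvd]
    push_cast
    simpa [sub_eq_zero] using h.mul_eq_two
  obtain ⟨n, -, hdvd, hpos, hlt⟩ := exists_mem_smallCoords ⟨p, by omega⟩ hp Fact.out
    ⟨x.val, x.val_lt⟩ hsextic ⟨y.val, y.val_lt⟩ hmul
  refine ⟨n, ?_, hpos, hlt⟩
  rw [← ZMod.intCast_zmod_eq_zero_iff_dvd] at hdvd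
  simpa [ofCoords_apply] using hdvd

section

variable {F : Type*} [Field F] {x y : F}

theorem exists_ofCoords_eq_zero_of_natCast_eq_zero (h : RootPair x y) {p : ℕ}
    (hp : p = 2 ∨ p = 3 ∨ p = 5) (h0 : (p : F) = 0) :
    ∃ n : Fin 6 → ℤ, ofCoords ℤ x y n = 0 ∧ 0 < normForm n ∧ normForm n < (p ^ 2) ^ 2 := by
  rcases hp with rfl | rfl | rfl
  · rcases mul_eq_zero.mp (h.mul_eq_two.trans h0) with hx | hy
    · exact ⟨![0, 0, 1, 0, 0, 0], by simp [ofCoords_apply, hx], by decide⟩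
    · exact ⟨![0, 0, 0, 0, 1, 0], by simp [ofCoords_apply, hy], by decide⟩
  · have hcube : (x + y + 2) ^ 3 = 0 := by
      rw [h.add_add_two_cube]
      exact mul_eq_zero_of_left h0 _
    have hsum : x + y + 2 = 0 := pow_eq_zero_iff three_ne_zero |>.mp hcube
    exact ⟨![2, 0, 1, 0, 1, 0], by rw [ofCoords_eq_add_add_two, hsum], by decide⟩
  · rcases mul_eq_zero.mp (h.sq_sub_mul_sq_sub.trans h0) with hxy | hyx
    · exact ⟨![0, 0, -1, 1, 0, 0], by simpa [ofCoords_apply, neg_add_eq_sub], by decide⟩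
    · exact ⟨![0, 0, 0, 0, -1, 1], by simpa [ofCoords_apply, neg_add_eq_sub], by decide⟩

theorem char_cases_of_sq_le_card [Fintype F] (h : RootPair x y) {p : ℕ} [CharP F p]
    (hp : p.Prime) (hsq : p ^ 2 ≤ Fintype.card F) (hle : Fintype.card F ≤ 148) :
    p = 2 ∨ p = 3 ∨ p = 5 := by
  have hp12 : p ≤ 12 := by nlinarith
  have hcases : (p = 2 ∨ p = 3 ∨ p = 5) ∨ p = 7 ∨ p = 11 :=
    (by decide : ∀ q ≤ 12, q.Prime → (q = 2 ∨ q = 3 ∨ q = 5) ∨ q = 7 ∨ q = 11) p hp12 hp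
  refine hcases.resolve_right fun hlarge => ?_
  have hroot : ∀ r : ZMod p, r ^ 3 - 6 * r - 1 ≠ 0 := by rcases hlarge with rfl | rfl <;> decide
  have : Fact p.Prime := ⟨hp⟩
  let _ := ZMod.algebra F p
  have hthree : 3 ≤ finrank (ZMod p) F := Nat.le_of_dvd finrank_pos (h.three_dvd_finrank hroot)
  have hcube : p ^ 3 ≤ Fintype.card F := by
    rw [Module.card_eq_pow_finrank (K := ZMod p) (V := F), ZMod.card]
    exact Nat.pow_le_pow_right hp.pos hthree
  rcases hlarge with rfl | rfl <;> omega

theorem exists_ofCoords_eq_zero [Fintype F] (h : RootPair x y) (hcard : 2 < Fintype.card F)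
    (hle : Fintype.card F ≤ 148) : ∃ n : Fin 6 → ℤ, ofCoords ℤ x y n = 0 ∧
      0 < normForm n ∧ normForm n < Fintype.card F ^ 2 := by
  obtain ⟨p, hchar⟩ := CharP.exists F
  obtain ⟨f, hp, hpow⟩ := FiniteField.card F p
  have : Fact p.Prime := ⟨hp⟩
  rcases (Nat.one_le_iff_ne_zero.mpr f.ne_zero).eq_or_lt with hone | htwo
  · rw [← hone, pow_one] at hpow
    rw [hpow] at hcard hle ⊢
    let e : ZMod p ≃+* F := ZMod.ringEquivOfPrime F hp hpow
    obtain ⟨n, hn, hnorm⟩ := exists_ofCoords_eq_zero_of_prime hcard hle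
      (h.map (e.symm : F →+* ZMod p))
    have hmap := map_ofCoords (e : ZMod p →+* F).toIntAlgHom (e.symm x) (e.symm y) n
    exact ⟨n, by simpa using hmap.symm.trans (by simpa using hn), hnorm⟩
  · have hsq : p ^ 2 ≤ Fintype.card F := hpow ▸ Nat.pow_le_pow_right hp.pos htwo
    obtain ⟨n, hn, hpos, hlt⟩ := h.exists_ofCoords_eq_zero_of_natCast_eq_zero
      (h.char_cases_of_sq_le_card hp hsq hle) (CharP.cast_eq_zero F p)
    exact ⟨n, hn, hpos, hlt.trans_le (by exact_mod_cast Nat.pow_le_pow_left hsq 2)⟩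

end

end RootPair

section

variable {O : Type*} [CommRing O] [IsDedekindDomain O] [Module.Free ℤ O]

theorem mem_or_sub_one_mem_of_absNorm_eq_two {P : Ideal O} (hP : Ideal.absNorm P = 2) (x : O) :
    x ∈ P ∨ x - 1 ∈ P := by
  rw [Ideal.absNorm_apply, Submodule.cardQuot_apply, Nat.card_eq_two_iff' (0 : O ⧸ P)] at hP
  have : Nontrivial (O ⧸ P) := ⟨_, _, hP.exists.choose_spec⟩
  refine or_iff_not_imp_left.mpr fun hx => ?_
  rw [← Ideal.Quotient.eq_zero_iff_mem, map_sub, map_one, sub_eq_zero]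
  exact hP.unique (mt Ideal.Quotient.eq_zero_iff_mem.mp hx) one_ne_zero

theorem absNorm_eq_two_of_pow_three_eq {I : Ideal O} {c : O} (hI : I ^ 3 = Ideal.span {c})
    (hc : Ideal.absNorm (Ideal.span {c}) = 8) : Ideal.absNorm I = 2 := by
  rw [← hI, map_pow] at hc
  exact Nat.pow_left_injective three_ne_zero (hc.trans (by norm_num))

variable [Module.Finite ℤ O]

theorem eq_span_two_of_mem {P : Ideal O} {c : O} (hP : Ideal.absNorm P = 2) (hc : c ∈ P)
    (hspan : Ideal.absNorm (Ideal.span {2, c}) = 2) : P = Ideal.span {2, c} := by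
  have hne : Ideal.span {2, c} ≠ ⊥ := by rw [ne_eq, ← Ideal.absNorm_eq_zero_iff]; omega
  have hmax : (Ideal.span {2, c}).IsMaximal :=
    (Ideal.isPrime_of_irreducible_absNorm (hspan ▸ Nat.prime_two)).isMaximal hne
  have htop : P ≠ ⊤ := by rw [ne_eq, ← Ideal.absNorm_eq_one_iff]; omega
  have h2 : (2 : O) ∈ P := by simpa [hP] using Ideal.absNorm_mem P
  exact (hmax.eq_of_le htop (Ideal.span_le.mpr (Set.pair_subset h2 hc))).symm

namespace RootPair

variable {a b : O} {v : Basis (Fin 6) ℤ O}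

theorem absNorm_span_ofCoords (h : RootPair a b) (hv : ⇑v = monomials a b) (c : Fin 6 → ℤ) :
    Ideal.absNorm (Ideal.span {ofCoords ℤ a b c}) = (normForm c).natAbs := by
  rw [Ideal.absNorm_span_singleton, h.norm_ofCoords hv]

theorem absNorm_span_two_left (h : RootPair a b) (hv : ⇑v = monomials a b) :
    Ideal.absNorm (Ideal.span {2, a - 1}) = 2 := by
  apply absNorm_eq_two_of_pow_three_eq h.symm.span_two_sub_one_pow_three
  have ha : a - 1 = ofCoords ℤ a b ![-1, 0, 1, 0, 0, 0] := by
    simp [ofCoords_apply, neg_add_eq_sub]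
  rw [ha, h.absNorm_span_ofCoords hv]
  decide

theorem absNorm_span_two_right (h : RootPair a b) (hv : ⇑v = monomials a b) :
    Ideal.absNorm (Ideal.span {2, b - 1}) = 2 := by
  apply absNorm_eq_two_of_pow_three_eq h.span_two_sub_one_pow_three
  have hb : b - 1 = ofCoords ℤ a b ![-1, 0, 0, 0, 1, 0] := by
    simp [ofCoords_apply, neg_add_eq_sub]
  rw [hb, h.absNorm_span_ofCoords hv]
  decide

theorem eq_span_two_of_absNorm_eq_two (h : RootPair a b) (hv : ⇑v = monomials a b)
    {P : Ideal O} (hP : Ideal.absNorm P = 2) :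
    P = Ideal.span {2, a - 1} ∨ P = Ideal.span {2, b - 1} := by
  rcases mem_or_sub_one_mem_of_absNorm_eq_two hP a with ha | ha
  · rcases mem_or_sub_one_mem_of_absNorm_eq_two hP b with hb | hb
    · have hone : (1 : O) ∈ P := by
        rw [← h.cube_add_cube]
        exact add_mem (P.pow_mem_of_mem ha 3 three_pos) (P.pow_mem_of_mem hb 3 three_pos)
      rw [(Ideal.eq_top_iff_one P).mpr hone, Ideal.absNorm_top] at hP
      omega
    · exact .inr (eq_span_two_of_mem hP hb (h.absNorm_span_two_right hv))
  · exact .inl (eq_span_two_of_mem hP ha (h.absNorm_span_two_left hv))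

theorem not_isPrincipal_of_absNorm_eq_two (h : RootPair a b) (hv : ⇑v = monomials a b)
    {I : Ideal O} (hI : Ideal.absNorm I = 2) : ¬I.IsPrincipal := by
  rintro ⟨x, rfl⟩
  rw [Ideal.submodule_span_eq, ← ofCoords_equivFun hv x, h.absNorm_span_ofCoords hv] at hI
  have hnonneg := normForm_nonneg (v.equivFun x)
  have htwo := normForm_ne_two (v.equivFun x)
  omega

theorem exists_mem_absNorm_span_lt_sq (h : RootPair a b) (hv : ⇑v = monomials a b)
    {P : Ideal O} [hP : P.IsPrime] (h0 : P ≠ ⊥) (htwo : Ideal.absNorm P ≠ 2)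
    (hle : Ideal.absNorm P ≤ 148) :
    ∃ x ∈ P, x ≠ 0 ∧ Ideal.absNorm (Ideal.span {x}) < Ideal.absNorm P ^ 2 := by
  have hmax : P.IsMaximal := hP.isMaximal h0
  let _ : Field (O ⧸ P) := Ideal.Quotient.field P
  have := Ideal.finiteQuotientOfFreeOfNeBot P h0
  let _ := Fintype.ofFinite (O ⧸ P)
  have hcard : Ideal.absNorm P = Fintype.card (O ⧸ P) := by
    rw [Ideal.absNorm_apply, Submodule.cardQuot_apply, Nat.card_eq_fintype_card]
  have hone : 1 < Fintype.card (O ⧸ P) := Fintype.one_lt_card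
  rw [hcard] at htwo hle ⊢
  obtain ⟨n, hn, hpos, hlt⟩ :=
    (h.map (Ideal.Quotient.mk P)).exists_ofCoords_eq_zero (by omega) hle
  refine ⟨ofCoords ℤ a b n, ?_, ?_, ?_⟩
  · rw [← Ideal.Quotient.eq_zero_iff_mem, ← hn]
    exact map_ofCoords (Ideal.Quotient.mk P).toIntAlgHom a b n
  · refine ofCoords_ne_zero hv ?_
    rintro rfl
    simp [normForm, relNorm, QuadraticAlgebra.norm_def] at hpos
  · rw [h.absNorm_span_ofCoords hv]
    zify
    rwa [abs_of_pos hpos]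

theorem mk0_mem_of_absNorm_le (h : RootPair a b) (hv : ⇑v = monomials a b)
    (H : Subgroup (ClassGroup O)) {Q : (Ideal O)⁰} (hQ : (Q : Ideal O) = Ideal.span {2, b - 1})
    (hH : ClassGroup.mk0 Q ∈ H) (I : (Ideal O)⁰) (hI : Ideal.absNorm (I : Ideal O) ≤ 148) :
    ClassGroup.mk0 I ∈ H := by
  refine mk0_mem_of_forall_isPrime H 148 (fun P hP hle => ?_) I hI
  by_cases htwo : Ideal.absNorm (P : Ideal O) = 2
  · left
    rcases h.eq_span_two_of_absNorm_eq_two hv htwo with hPa | hPb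
    · refine mk0_mem_of_mul_eq_span_singleton H (x := a ^ 2 + b ^ 2 - a - b) ?_ hH
      rw [hPa, hQ, h.span_two_sub_one_mul]
    · rwa [show P = Q from Subtype.ext (hPb.trans hQ.symm)]
  · exact .inr (h.exists_mem_absNorm_span_lt_sq hv (nonZeroDivisors.coe_ne_zero P) htwo hle)

end RootPair

end

open NumberField

theorem exists_mk0_eq_absNorm_le {K : Type*} [Field K] [NumberField K] (hrank : finrank ℚ K = 6)
    (hdiscr : discr K = -279 ^ 3) (C : ClassGroup (𝓞 K)) :
    ∃ I : (Ideal (𝓞 K))⁰, ClassGroup.mk0 I = C ∧ Ideal.absNorm (I : Ideal (𝓞 K)) ≤ 148 := by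
  obtain ⟨I, hI, hn⟩ := exists_ideal_in_class_of_norm_le C
  refine ⟨I, hI, ?_⟩
  rw [hdiscr, hrank] at hn
  have hplaces : InfinitePlace.nrComplexPlaces K ≤ 3 := by
    have := InfinitePlace.card_add_two_mul_card_eq_rank K
    omega
  have hpi : 4 / Real.pi ≤ 1.27325 := by
    rw [div_le_iff₀ Real.pi_pos]
    linarith [Real.pi_gt_d6]
  have hone : 1 ≤ 4 / Real.pi := (one_le_div₀ Real.pi_pos).mpr Real.pi_le_four
  have hpow : (4 / Real.pi) ^ InfinitePlace.nrComplexPlaces K ≤ 1.27325 ^ 3 :=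
    (pow_le_pow_right₀ hone hplaces).trans (pow_le_pow_left₀ (by positivity) hpi 3)
  have hsqrt : √|((-279 ^ 3 : ℤ) : ℝ)| ≤ 4661 := by
    apply Real.sqrt_le_iff.mpr
    norm_num
  have hlt : (Ideal.absNorm (I : Ideal (𝓞 K)) : ℝ) < 149 := by
    refine hn.trans_lt ?_
    calc _ ≤ (1.27325 : ℝ) ^ 3 * ((Nat.factorial 6 : ℝ) / 6 ^ 6 * 4661) := by
          gcongr
          exact_mod_cast le_rfl
      _ < 149 := by norm_num [Nat.factorial]
  exact Nat.le_of_lt_succ (by exact_mod_cast hlt)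

namespace RootPair

variable {K : Type*} [Field K] [NumberField K] {a b : 𝓞 K} {v : Basis (Fin 6) ℤ (𝓞 K)}

theorem discr_eq_neg_cube (h : RootPair a b) (hv : ⇑v = monomials a b) :
    NumberField.discr K = -279 ^ 3 := by
  rw [← NumberField.discr_eq_discr K v, h.discr_eq hv]

theorem card_classGroup_eq_three (h : RootPair a b) (hv : ⇑v = monomials a b) :
    Nat.card (ClassGroup (𝓞 K)) = 3 := by
  have hrank : finrank ℚ K = 6 := by
    rw [← RingOfIntegers.rank, finrank_eq_card_basis v, Fintype.card_fin]
  have hnorm := h.absNorm_span_two_right hv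
  have hne : Ideal.span {2, b - 1} ≠ ⊥ := by rw [ne_eq, ← Ideal.absNorm_eq_zero_iff]; omega
  let Q : (Ideal (𝓞 K))⁰ := ⟨Ideal.span {2, b - 1}, mem_nonZeroDivisors_of_ne_zero hne⟩
  have hcube : ClassGroup.mk0 Q ^ 3 = 1 := by
    rw [← map_pow, ClassGroup.mk0_eq_one_iff (Q ^ 3).2]
    exact ⟨b - 1, h.span_two_sub_one_pow_three⟩
  have hnot : ClassGroup.mk0 Q ≠ 1 := by
    rw [ne_eq, ClassGroup.mk0_eq_one_iff Q.2]
    exact h.not_isPrincipal_of_absNorm_eq_two hv hnorm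
  have hgen (C : ClassGroup (𝓞 K)) : C ∈ Subgroup.zpowers (ClassGroup.mk0 Q) := by
    obtain ⟨I, rfl, hI⟩ := exists_mk0_eq_absNorm_le hrank (h.discr_eq_neg_cube hv) C
    exact h.mk0_mem_of_absNorm_le hv _ rfl (Subgroup.mem_zpowers _) I hI
  rw [← orderOf_eq_card_of_forall_mem_zpowers hgen, orderOf_eq_prime hcube hnot]

end RootPair

section

variable {K : Type*} [Field K] [Algebra ℚ K]

theorem rootPair_two_mul_inv {α : K} (hα : α ^ 6 - α ^ 3 + 8 = 0) : RootPair α (2 * α⁻¹) := by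
  have := algebraRat.charZero K
  have h0 : α ≠ 0 := by
    rintro rfl
    norm_num at hα
  constructor
  · field_simp
  · field_simp
    linear_combination hα

theorem algebraAdjoin_pair_eq_top {F E : Type*} [Field F] [Field E] [Algebra F E] {α : E}
    (hα : IsAlgebraic F α) (htop : IntermediateField.adjoin F {α} = ⊤) (β : E) :
    Algebra.adjoin F {α, β} = ⊤ := by
  have hsimple : Algebra.adjoin F {α} = ⊤ := by
    rw [← IntermediateField.adjoin_simple_toSubalgebra_of_isAlgebraic hα, htop,
      IntermediateField.top_toSubalgebra]
  exact top_le_iff.mp (hsimple ▸ Algebra.adjoin_mono (by simp))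

theorem RootPair.card_classGroup_integralClosure_eq_three [FiniteDimensional ℚ K]
    {a b : integralClosure ℤ K} {v : Basis (Fin 6) ℤ (integralClosure ℤ K)} (h : RootPair a b)
    (hv : ⇑v = monomials a b) : Nat.card (ClassGroup (integralClosure ℤ K)) = 3 := by
  have := algebraRat.charZero K
  obtain rfl : ‹Algebra ℚ K› = DivisionRing.toRatAlgebra := Subsingleton.elim _ _
  have : NumberField K := ⟨⟩
  exact card_classGroup_eq_three (K := K) h hv

end

/-- Let `K = ℚ[X]/(X⁶ − X³ + 8)` (that is, `K = ℚ(α)` where `α` is a root of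
`X⁶ − X³ + 8`). Then `K` is a number field of degree 6, the subring `ℤ[α, 2·α⁻¹]`
equals the ring of integers of `K`, and the class group of `K` has exactly 3 elements. -/
theorem statement_11 (K : Type*) [Field K] [Algebra ℚ K] (α : K)
    (hα : α ^ 6 - α ^ 3 + 8 = 0)
    (hgen : IntermediateField.adjoin ℚ {α} = ⊤) :
    Module.finrank ℚ K = 6 ∧
    Algebra.adjoin ℤ ({α, 2 * α⁻¹} : Set K) = integralClosure ℤ K ∧
    Nat.card (ClassGroup (integralClosure ℤ K)) = 3 := by
  have h := rootPair_two_mul_inv hα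
  have htop := algebraAdjoin_pair_eq_top (h.isIntegral.tower_top.isAlgebraic) hgen (2 * α⁻¹)
  have hrank : finrank ℚ K = 6 := h.finrank_rat_eq_six htop
  have : FiniteDimensional ℚ K := Module.finite_of_finrank_pos (by omega)
  obtain ⟨v, hv⟩ := h.exists_basis_rat htop
  obtain ⟨a, b, w, hab, hw⟩ := h.exists_basis_integralClosure hv
  exact ⟨hrank, h.adjoin_eq_integralClosure hv, hab.card_classGroup_integralClosure_eq_three hw⟩
end

section
/- Let K = ℚ[X]/(X² − 205X + 10609) and let α be the class of X in K. Then K is an imaginary quadratic field (isomorphic to ℚ(√−411)), the subring ℤ[α] equals the ring of integers of K, and the class group of K is cyclic of order 6. -/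
/-!
For an integer root `r` modulo `m` of `f = X² - 205X + 10609`, consider the ideal `(m, α - r)` of
`ℤ[α]`. Ideals with the same `r` multiply by multiplying the moduli, replacing `r` by `205 - r`
inverts the class, and `(f(r), α - r)` is generated by `α - r`. Since `f` has squarefree
discriminant `-411`, `ℤ[α]` is the maximal order, and by Minkowski's bound, `(2 / π) √411 < 13`,
the class group is generated by the primes above `2, 3, 5, 7, 11`. Now `2` and `11` are inert,
while `f(111) = 5² · 7` and `f(104) = 3 · 5 · 7` express the primes above `7` and `3` as the square
and the inverse cube of the class `c` of a prime above `5`. As `3` ramifies, `c ^ 6 = 1`. Finally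
`c ^ 2` and `c ^ 3` are nontrivial: an element of `ℤ[α]` dividing an integer `m` with `4m² < 411`
is rational, so `(3, α - 104)` and `(7, α - 104)` are not principal.
-/

open QuadraticAlgebra Ideal
open scoped nonZeroDivisors NumberField

section CommRing

variable {R : Type*} [CommRing R] {m m' k x y u v w : R}

theorem span_pair_mul_span_pair_of_dvd (hdvd : m * m' ∣ x * y)
    (hone : u * m + v * m' + w * (x - y) = 1) :
    span {m, x} * span {m', x} = span {m * m', x} := by
  obtain ⟨c, hc⟩ := hdvd
  have hx : -w * c * (m * m') + (u * (m * x) + (v * (x * m') + w * (x * x))) = x := by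
    linear_combination x * hone + w * hc
  rw [span_pair_mul_span_pair]
  apply le_antisymm <;>
    simp only [span_le, Set.insert_subset_iff, Set.singleton_subset_iff, SetLike.mem_coe]
  · have hxI : x ∈ span {m * m', x} := mem_span_pair.mpr ⟨0, 1, by ring⟩
    exact ⟨mem_span_pair.mpr ⟨1, 0, by ring⟩, mul_mem_left _ _ hxI, mul_mem_right _ _ hxI,
      mul_mem_left _ _ hxI⟩
  · refine ⟨subset_span (by simp), ?_⟩
    simp only [mem_span_insert, mem_span_singleton']
    exact ⟨_, _, ⟨_, _, ⟨_, _, ⟨_, rfl⟩, rfl⟩, rfl⟩, hx.symm⟩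

theorem span_pair_mul_span_pair_of_mul_eq (hmul : x * y = m * k)
    (hone : u * m + v * k + w * (x - y) = 1) :
    span {m, x} * span {m, y} = span {m} := by
  have hm : u * (m * m) + (-w * (m * y) + (w * (x * m) + v * (x * y))) = m := by
    linear_combination m * hone + v * hmul
  rw [span_pair_mul_span_pair]
  apply le_antisymm <;>
    simp only [span_le, Set.insert_subset_iff, Set.singleton_subset_iff, SetLike.mem_coe]
  · simp only [mem_span_singleton, hmul, dvd_mul_right, dvd_mul_left, and_self]
  · simp only [mem_span_insert, mem_span_singleton']
    exact ⟨_, _, ⟨_, _, ⟨_, _, ⟨_, rfl⟩, rfl⟩, rfl⟩, hm.symm⟩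

theorem dvd_of_intCast_mem {I : Ideal R} (hI : I ≠ ⊤) {p n : ℤ}
    (hp : Prime p) (hpI : (p : R) ∈ I) (hn : (n : R) ∈ I) : p ∣ n := by
  by_contra hpn
  obtain ⟨u, v, huv⟩ := (hp.irreducible.coprime_iff_not_dvd).mpr hpn
  refine hI ((eq_top_iff_one I).mpr ?_)
  have h1 : (u : R) * p + v * n = 1 := by exact_mod_cast congrArg (Int.cast : ℤ → R) huv
  exact h1 ▸ I.add_mem (I.mul_mem_left _ hpI) (I.mul_mem_left _ hn)

end CommRing

section RootIdeal

variable {a b : ℤ}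

local notation "ℤ[ω]" => QuadraticAlgebra ℤ a b

variable (a b) in
/-- The ideal `(m, ω - r)` of `ℤ[ω]`, where `ω ^ 2 = a + b * ω`. It is meant for `r` a root modulo
`m` of the minimal polynomial `X ^ 2 - b * X - a` of `ω`; the conjugate root is `b - r`. -/
def rootIdeal (m r : ℤ) : Ideal (ℤ[ω]) :=
  span {(m : ℤ[ω]), (ω : ℤ[ω]) - r}

variable (a b) in
theorem omega_sub_mul_omega_sub (r : ℤ) :
    ((ω : ℤ[ω]) - r) * ((ω : ℤ[ω]) - (b - r : ℤ)) = (-(r ^ 2 - b * r - a) : ℤ) := by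
  have hω : (ω : ℤ[ω]) * ω = (a : ℤ[ω]) + (b : ℤ[ω]) * (ω : ℤ[ω]) := by
    simpa using omega_mul_omega_eq_add (R := ℤ) (a := a) (b := b)
  push_cast
  linear_combination hω

theorem intCast_dvd_iff {m : ℤ} {z : ℤ[ω]} :
    (m : ℤ[ω]) ∣ z ↔ m ∣ z.re ∧ m ∣ z.im := by
  simpa using algebraMap_dvd_iff (r := m) (z := z)

theorem im_eq_zero_of_dvd_intCast {m : ℤ} {z : ℤ[ω]} (hm : m ≠ 0)
    (hlt : 4 * m ^ 2 < -(b ^ 2 + 4 * a)) (hz : z ∣ m) : z.im = 0 := by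
  have hnorm : z.norm ∣ m ^ 2 := by
    simpa using map_dvd QuadraticAlgebra.norm hz
  have hle : z.norm ≤ m ^ 2 := Int.le_of_dvd (by positivity) hnorm
  rw [norm_def] at hle
  by_contra him
  have him_sq : 1 ≤ z.im ^ 2 := sq_pos_iff.mpr him
  nlinarith [sq_nonneg (2 * z.re + b * z.im)]

theorem intCast_mem_of_omega_sub_mem {I : Ideal ℤ[ω]} {r : ℤ} (hω : (ω : ℤ[ω]) - r ∈ I) :
    ((r ^ 2 - b * r - a : ℤ) : ℤ[ω]) ∈ I := by
  rw [← neg_mem_iff, ← Int.cast_neg, ← omega_sub_mul_omega_sub]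
  exact I.mul_mem_right _ hω

theorem eq_re_add_im_mul_omega_sub (z : ℤ[ω]) (r : ℤ) :
    z = ((z.re + z.im * r : ℤ) : ℤ[ω]) + z.im * ((ω : ℤ[ω]) - r) := by
  ext <;> simp

theorem exists_omega_sub_mem {I : Ideal ℤ[ω]} {p : ℤ} (hI : I ≠ ⊤) (hp : Prime p)
    (hpI : (p : ℤ[ω]) ∈ I) {z : ℤ[ω]} (hz : z ∈ I) (hpz : ¬(p : ℤ[ω]) ∣ z) :
    ∃ r : ℤ, (ω : ℤ[ω]) - r ∈ I := by
  have hz_eq := eq_re_add_im_mul_omega_sub z 0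
  have him : ¬p ∣ z.im := by
    intro hdvd
    have hmem : (z.im : ℤ[ω]) * ω ∈ I :=
      I.mul_mem_right _ (mem_of_dvd _ (Int.cast_dvd_cast _ _ hdvd) hpI)
    have hre : (z.re : ℤ[ω]) ∈ I := by
      rw [hz_eq] at hz
      simpa using (I.add_mem_iff_left (by simpa using hmem)).mp hz
    exact hpz (intCast_dvd_iff.mpr ⟨dvd_of_intCast_mem hI hp hpI hre, hdvd⟩)
  obtain ⟨u, v, huv⟩ := (hp.irreducible.coprime_iff_not_dvd).mpr him
  have hone : (u : ℤ[ω]) * p + v * z.im = 1 := by exact_mod_cast congrArg Int.cast huv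
  refine ⟨-(v * z.re), ?_⟩
  have : (ω : ℤ[ω]) - ((-(v * z.re) : ℤ) : ℤ[ω]) = u * (ω : ℤ[ω]) * p + v * z := by
    push_cast at hz_eq ⊢
    linear_combination -(ω : ℤ[ω]) * hone - v * hz_eq
  exact this ▸ I.add_mem (I.mul_mem_left _ hpI) (I.mul_mem_left _ hz)

namespace rootIdeal

variable {m m' k r s p : ℤ}

theorem intCast_mem : (m : ℤ[ω]) ∈ rootIdeal a b m r :=
  subset_span (Set.mem_insert _ _)

theorem omega_sub_mem : (ω : ℤ[ω]) - r ∈ rootIdeal a b m r :=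
  subset_span (Set.mem_insert_of_mem _ rfl)

theorem mul_same_root (hdvd : m * m' ∣ r ^ 2 - b * r - a)
    (hcop : IsCoprime ((m.gcd m' : ℕ) : ℤ) (2 * r - b)) :
    rootIdeal a b m r * rootIdeal a b m' r = rootIdeal a b (m * m') r := by
  obtain ⟨u, v, huv⟩ := hcop
  rw [Int.gcd_eq_gcd_ab] at huv
  have hprod : (m : ℤ[ω]) * m' ∣ ((ω : ℤ[ω]) - r) * ((ω : ℤ[ω]) - (b - r : ℤ)) := by
    rw [omega_sub_mul_omega_sub]
    exact_mod_cast Int.cast_dvd_cast _ _ (hdvd.neg_right)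
  rw [rootIdeal, rootIdeal, rootIdeal, Int.cast_mul]
  refine span_pair_mul_span_pair_of_dvd (u := u * m.gcdA m') (v := u * m.gcdB m') (w := -v) hprod ?_
  have := congrArg (Int.cast : ℤ → ℤ[ω]) huv
  push_cast at this ⊢
  linear_combination this

theorem mul_conj (hnorm : r ^ 2 - b * r - a = m * k)
    (hcop : IsCoprime ((m.gcd k : ℕ) : ℤ) (2 * r - b)) :
    rootIdeal a b m r * rootIdeal a b m (b - r) = span {(m : ℤ[ω])} := by
  obtain ⟨u, v, huv⟩ := hcop
  rw [Int.gcd_eq_gcd_ab] at huv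
  refine span_pair_mul_span_pair_of_mul_eq (k := ((-k : ℤ) : ℤ[ω]))
    (u := u * m.gcdA k) (v := -(u * m.gcdB k)) (w := -v) ?_ ?_
  · rw [omega_sub_mul_omega_sub, hnorm]; push_cast; ring
  · have := congrArg (Int.cast : ℤ → ℤ[ω]) huv
    push_cast at this ⊢
    linear_combination this

variable (a b r) in
theorem eq_span_omega_sub :
    rootIdeal a b (r ^ 2 - b * r - a) r = span {(ω : ℤ[ω]) - r} := by
  refine span_pair_eq_span_right_iff_dvd.mpr ?_
  rw [← dvd_neg, ← Int.cast_neg, ← omega_sub_mul_omega_sub]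
  exact dvd_mul_right _ _

theorem congr (h : r ≡ s [ZMOD m]) : rootIdeal a b m r = rootIdeal a b m s := by
  obtain ⟨c, hc⟩ := h.dvd
  have : (ω : ℤ[ω]) - r = (ω : ℤ[ω]) - s + c * m := by
    have := congrArg (Int.cast : ℤ → ℤ[ω]) hc
    push_cast at this
    linear_combination this
  rw [rootIdeal, rootIdeal, this, span_pair_add_mul_left]

theorem ne_bot (hm : m ≠ 0) : rootIdeal a b m r ≠ ⊥ := fun h =>
  Int.cast_ne_zero.mpr hm (mem_bot.mp (h ▸ intCast_mem))

theorem ne_top (hm : ¬IsUnit m) (hdvd : m ∣ r ^ 2 - b * r - a) : rootIdeal a b m r ≠ ⊤ := by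
  intro htop
  obtain ⟨u, v, huv⟩ := mem_span_pair.mp ((eq_top_iff_one _).mp htop)
  obtain ⟨k, hk⟩ := hdvd
  have hconj : (m : ℤ[ω]) ∣ (ω : ℤ[ω]) - (b - r : ℤ) := by
    have hmul := omega_sub_mul_omega_sub a b r
    rw [hk] at hmul
    refine ⟨u * ((ω : ℤ[ω]) - (b - r : ℤ)) - v * k, ?_⟩
    push_cast at hmul ⊢
    linear_combination -((ω : ℤ[ω]) - (b - r)) * huv + v * hmul
  apply hm
  simpa [isUnit_iff_dvd_one] using (intCast_dvd_iff.mp hconj).2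

theorem not_isPrincipal (hm : 1 < m) (hdvd : m ∣ r ^ 2 - b * r - a)
    (hlt : 4 * m ^ 2 < -(b ^ 2 + 4 * a)) : ¬(rootIdeal a b m r).IsPrincipal := by
  rintro ⟨z, hz⟩
  rw [submodule_span_eq] at hz
  have hzm : z ∣ m := mem_span_singleton.mp (hz ▸ intCast_mem)
  have hzω : z ∣ (ω : ℤ[ω]) - r := mem_span_singleton.mp (hz ▸ omega_sub_mem)
  have hz_int : z = (z.re : ℤ[ω]) := by
    ext <;> simp [im_eq_zero_of_dvd_intCast (by omega) hlt hzm]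
  have hz_unit : IsUnit z := by
    rw [hz_int] at hzω ⊢
    have : IsUnit z.re := by simpa [isUnit_iff_dvd_one] using (intCast_dvd_iff.mp hzω).2
    exact this.map (Int.castRingHom _)
  exact ne_top (by rw [Int.isUnit_iff]; omega) hdvd (hz.trans (span_singleton_eq_top.mpr hz_unit))

theorem eq_of_omega_sub_mem {I : Ideal ℤ[ω]} (hI : I ≠ ⊤) (hp : Prime p)
    (hpI : (p : ℤ[ω]) ∈ I) (hω : (ω : ℤ[ω]) - r ∈ I) : I = rootIdeal a b p r := by
  apply le_antisymm
  · intro z hz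
    rw [eq_re_add_im_mul_omega_sub z r] at hz ⊢
    have hint := (I.add_mem_iff_left (I.mul_mem_left _ hω)).mp hz
    exact add_mem (mem_of_dvd _ (Int.cast_dvd_cast _ _ (dvd_of_intCast_mem hI hp hpI hint))
      intCast_mem) (mul_mem_left _ _ omega_sub_mem)
  · exact span_le.mpr (Set.insert_subset hpI (Set.singleton_subset_iff.mpr hω))

theorem exists_eq_of_prime_mem {I : Ideal ℤ[ω]} (hI : I ≠ ⊤) (hp : Prime p)
    (hpI : (p : ℤ[ω]) ∈ I) :
    I = span {(p : ℤ[ω])} ∨ ∃ r, p ∣ r ^ 2 - b * r - a ∧ I = rootIdeal a b p r := by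
  by_cases hdvd : ∀ z ∈ I, (p : ℤ[ω]) ∣ z
  · exact .inl (le_antisymm (fun z hz => mem_span_singleton.mpr (hdvd z hz))
      ((span_singleton_le_iff_mem I).mpr hpI))
  · push Not at hdvd
    obtain ⟨z, hz, hpz⟩ := hdvd
    obtain ⟨r, hr⟩ := exists_omega_sub_mem hI hp hpI hz hpz
    exact .inr ⟨r, dvd_of_intCast_mem hI hp hpI (intCast_mem_of_omega_sub_mem hr),
      eq_of_omega_sub_mem hI hp hpI hr⟩

theorem eq_or_eq_conj (hp : Prime p) (hr : p ∣ r ^ 2 - b * r - a) (hs : p ∣ s ^ 2 - b * s - a) :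
    rootIdeal a b p r = rootIdeal a b p s ∨ rootIdeal a b p r = rootIdeal a b p (b - s) := by
  have hdvd : p ∣ (r - s) * (r - (b - s)) := by
    rw [show (r - s) * (r - (b - s)) = r ^ 2 - b * r - a - (s ^ 2 - b * s - a) by ring]
    exact dvd_sub hr hs
  exact (hp.dvd_or_dvd hdvd).imp (fun h => congr (Int.modEq_iff_dvd.mpr h).symm)
    (fun h => congr (Int.modEq_iff_dvd.mpr h).symm)

end rootIdeal

section RootClass

variable {R : Type*} [CommRing R] [IsDedekindDomain R] (e : QuadraticAlgebra ℤ a b ≃+* R)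

/-- The class of the ideal `(m, ω - r)` in the class group of a Dedekind domain `R` identified with
`ℤ[ω]` through `e`. Carrying `e` along avoids transporting the class group of `R` to `ℤ[ω]`. -/
noncomputable def rootClass (m r : ℤ) [NeZero m] : ClassGroup R :=
  ClassGroup.mk0 ⟨(rootIdeal a b m r).map e, mem_nonZeroDivisors_of_ne_zero <|
    (map_eq_bot_iff_of_injective e.injective).not.mpr (rootIdeal.ne_bot (NeZero.ne m))⟩

namespace rootClass

variable {m m' k r s p : ℤ} [NeZero m] [NeZero m'] [NeZero p]

theorem congr (h : r ≡ s [ZMOD m]) : rootClass e m r = rootClass e m s := by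
  simp only [rootClass, rootIdeal.congr h]

theorem mul_same_root (hdvd : m * m' ∣ r ^ 2 - b * r - a)
    (hcop : IsCoprime ((m.gcd m' : ℕ) : ℤ) (2 * r - b)) :
    rootClass e m r * rootClass e m' r = rootClass e (m * m') r := by
  simp only [rootClass, ← rootIdeal.mul_same_root hdvd hcop, Ideal.map_mul, ← map_mul]
  rfl

theorem eq_one (h : r ^ 2 - b * r - a = m) : rootClass e m r = 1 := by
  subst h
  rw [rootClass, ClassGroup.mk0_eq_one_iff]
  simp only [rootIdeal.eq_span_omega_sub, map_span, Set.image_singleton]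
  infer_instance

theorem mul_conj (hnorm : r ^ 2 - b * r - a = m * k)
    (hcop : IsCoprime ((m.gcd k : ℕ) : ℤ) (2 * r - b)) :
    rootClass e m r * rootClass e m (b - r) = 1 := by
  rw [rootClass, rootClass, ← map_mul, ClassGroup.mk0_eq_one_iff]
  simp only [Submonoid.coe_mul, ← Ideal.map_mul, rootIdeal.mul_conj hnorm hcop, map_span,
    Set.image_singleton]
  infer_instance

theorem ne_one (hm : 1 < m) (hdvd : m ∣ r ^ 2 - b * r - a)
    (hlt : 4 * m ^ 2 < -(b ^ 2 + 4 * a)) : rootClass e m r ≠ 1 := by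
  rw [rootClass, Ne, ClassGroup.mk0_eq_one_iff]
  intro h
  refine rootIdeal.not_isPrincipal hm hdvd hlt ?_
  rw [← (rootIdeal a b m r).map_of_equiv e]
  exact h.map_ringHom (e.symm : R →+* ℤ[ω])

theorem mk0_eq_one_or_exists_eq (hp : Prime p) {P : (Ideal R)⁰} (hP : (P : Ideal R) ≠ ⊤)
    (hpP : (p : R) ∈ (P : Ideal R)) :
    ClassGroup.mk0 P = 1 ∨ ∃ r, p ∣ r ^ 2 - b * r - a ∧ ClassGroup.mk0 P = rootClass e p r := by
  have hI : (P : Ideal R).comap e ≠ ⊤ := comap_ne_top _ hP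
  have hmap : ((P : Ideal R).comap e).map e = P := map_comap_of_surjective _ e.surjective _
  refine (rootIdeal.exists_eq_of_prime_mem hI hp (by simpa using hpP)).imp (fun h => ?_) ?_
  · rw [ClassGroup.mk0_eq_one_iff, ← hmap, h, map_span, Set.image_singleton]
    infer_instance
  · rintro ⟨r, hr, h⟩
    exact ⟨r, hr, congrArg ClassGroup.mk0 (Subtype.ext (by rw [← hmap, h]))⟩

include e in
theorem mk0_eq_one_of_forall_zmod_ne_zero {p : ℕ} (hp : p.Prime)
    (hinert : ∀ x : ZMod p, x ^ 2 - b * x - a ≠ 0) {P : (Ideal R)⁰} (hP : (P : Ideal R) ≠ ⊤)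
    (hpP : (p : R) ∈ (P : Ideal R)) : ClassGroup.mk0 P = 1 := by
  have : NeZero (p : ℤ) := ⟨Int.natCast_ne_zero.mpr hp.ne_zero⟩
  refine (mk0_eq_one_or_exists_eq e (Nat.prime_iff_prime_int.mp hp) hP
    (by exact_mod_cast hpP)).resolve_right fun ⟨r, hr, _⟩ => hinert r ?_
  exact_mod_cast (ZMod.intCast_zmod_eq_zero_iff_dvd _ p).mpr hr

theorem mk0_mem_zpowers (hp : Prime p) (hnorm : s ^ 2 - b * s - a = p * k)
    (hcop : IsCoprime ((p.gcd k : ℕ) : ℤ) (2 * s - b))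
    {P : (Ideal R)⁰} (hP : (P : Ideal R) ≠ ⊤) (hpP : (p : R) ∈ (P : Ideal R)) :
    ClassGroup.mk0 P ∈ Subgroup.zpowers (rootClass e p s) := by
  obtain h | ⟨r, hr, h⟩ := mk0_eq_one_or_exists_eq e hp hP hpP <;> rw [h]
  · exact one_mem _
  obtain h | h := rootIdeal.eq_or_eq_conj hp hr (Dvd.intro k hnorm.symm)
  · simp only [rootClass, h]
    exact Subgroup.mem_zpowers _
  · have : rootClass e p r = (rootClass e p s)⁻¹ := by
      rw [← eq_inv_of_mul_eq_one_right (mul_conj e hnorm hcop)]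
      simp only [rootClass, h]
    exact this ▸ inv_mem (Subgroup.mem_zpowers _)

end rootClass

end RootClass

end RootIdeal

section ClassGroup

variable {R : Type*} [CommRing R] [IsDedekindDomain R]

theorem classGroup_mk0_mem_of_forall_mem_normalizedFactors {H : Subgroup (ClassGroup R)}
    (I : (Ideal R)⁰) (h : ∀ P : (Ideal R)⁰,
      (P : Ideal R) ∈ UniqueFactorizationMonoid.normalizedFactors (I : Ideal R) →
        ClassGroup.mk0 P ∈ H) : ClassGroup.mk0 I ∈ H := by
  have hI := nonZeroDivisors.coe_ne_zero I
  suffices hmap : (I : Ideal R) ∈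
      (H.toSubmonoid.comap ClassGroup.mk0).map (Ideal R)⁰.subtype by
    obtain ⟨J, hJ, hJI⟩ := hmap
    exact Subtype.ext hJI ▸ hJ
  rw [← Ideal.prod_normalizedFactors_eq_self hI]
  refine Submonoid.multiset_prod_mem _ _ fun P hP => ?_
  have hP0 := (UniqueFactorizationMonoid.prime_of_normalized_factor P hP).ne_zero
  exact ⟨⟨P, mem_nonZeroDivisors_of_ne_zero hP0⟩, h _ hP, rfl⟩

theorem exists_prime_le_absNorm_of_isPrime [Module.Free ℤ R] [Module.Finite ℤ R] {P : Ideal R}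
    [P.IsPrime] (hP : P ≠ ⊥) : ∃ p : ℕ, p.Prime ∧ p ≤ absNorm P ∧ (p : R) ∈ P := by
  have : NeZero P := ⟨hP⟩
  exact ⟨_, Nat.absNorm_under_prime P,
    Nat.le_of_dvd (absNorm_pos_iff_mem_nonZeroDivisors.mpr (mem_nonZeroDivisors_of_ne_zero hP))
      (Int.absNorm_under_dvd_absNorm P), Int.absNorm_under_mem P⟩

theorem subgroup_classGroup_eq_top_of_forall_prime_lt [Module.Free ℤ R] [Module.Finite ℤ R] {N : ℕ}
    (hN : ∀ C : ClassGroup R, ∃ I : (Ideal R)⁰, ClassGroup.mk0 I = C ∧ absNorm (I : Ideal R) < N)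
    {H : Subgroup (ClassGroup R)}
    (hH : ∀ p : ℕ, p.Prime → p < N → ∀ P : (Ideal R)⁰, (P : Ideal R) ≠ ⊤ →
      (p : R) ∈ (P : Ideal R) → ClassGroup.mk0 P ∈ H) : H = ⊤ := by
  rw [Subgroup.eq_top_iff']
  intro C
  obtain ⟨I, rfl, hIN⟩ := hN C
  refine classGroup_mk0_mem_of_forall_mem_normalizedFactors I fun P hP => ?_
  have hPI := UniqueFactorizationMonoid.dvd_of_mem_normalizedFactors hP
  have : (P : Ideal R).IsPrime :=
    isPrime_of_prime (UniqueFactorizationMonoid.prime_of_normalized_factor _ hP)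
  obtain ⟨p, hp, hpP, hmem⟩ := exists_prime_le_absNorm_of_isPrime (nonZeroDivisors.coe_ne_zero P)
  have hPI_norm : absNorm (P : Ideal R) ≤ absNorm (I : Ideal R) :=
    Nat.le_of_dvd (absNorm_pos_of_nonZeroDivisors I) (map_dvd absNorm hPI)
  exact hH p hp (hpP.trans_lt (hPI_norm.trans_lt hIN)) P (IsPrime.ne_top inferInstance) hmem

end ClassGroup

section Minkowski

variable {K : Type*} [Field K] [NumberField K]

theorem exists_mk0_eq_absNorm_le_of_finrank_eq_two (hK : Module.finrank ℚ K = 2)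
    (C : ClassGroup (𝓞 K)) : ∃ I : (Ideal (𝓞 K))⁰, ClassGroup.mk0 I = C ∧
      (absNorm (I : Ideal (𝓞 K)) : ℝ) ≤ 2 / Real.pi * √|NumberField.discr K| := by
  obtain ⟨I, hIC, hI⟩ := NumberField.exists_ideal_in_class_of_norm_le C
  refine ⟨I, hIC, hI.trans ?_⟩
  have hplaces : NumberField.InfinitePlace.nrComplexPlaces K ≤ 1 := by
    have := NumberField.InfinitePlace.card_add_two_mul_card_eq_rank K
    omega
  have hpi : 1 ≤ 4 / Real.pi := (one_le_div Real.pi_pos).mpr Real.pi_le_four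
  rw [hK]
  calc (4 / Real.pi) ^ NumberField.InfinitePlace.nrComplexPlaces K *
        ((2).factorial / (2 : ℕ) ^ 2 * √|NumberField.discr K|)
      ≤ (4 / Real.pi) ^ 1 * ((2).factorial / (2 : ℕ) ^ 2 * √|NumberField.discr K|) := by
        gcongr
    _ = 2 / Real.pi * √|NumberField.discr K| := by
        norm_num [Nat.factorial]
        ring

theorem two_div_pi_mul_sqrt_lt : 2 / Real.pi * √411 < 13 := by
  have hsqrt : √411 < 20.28 := (Real.sqrt_lt' (by norm_num)).mpr (by norm_num)
  rw [div_mul_eq_mul_div, div_lt_iff₀ Real.pi_pos]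
  linarith [Real.pi_gt_d2]

end Minkowski

section QuadraticExtension

variable {R S : Type*} [CommRing R] [CommRing S] [Algebra R S]

theorem coe_basis_quadraticAlgebra (a b : R) :
    ⇑(QuadraticAlgebra.basis a b) = ![1, ω] := by
  funext i
  apply (QuadraticAlgebra.basis a b).repr.injective
  fin_cases i <;> (ext j; fin_cases j <;> simp)

theorem algebraTrace_quadraticAlgebra {a b : R} (z : QuadraticAlgebra R a b) :
    Algebra.trace R (QuadraticAlgebra R a b) z = trace z := by
  rw [Algebra.trace_eq_matrix_trace (QuadraticAlgebra.basis a b), Matrix.trace_fin_two]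
  simp only [Algebra.leftMulMatrix_eq_repr_mul, coe_basis_quadraticAlgebra, basis_repr_apply]
  simp only [Fin.isValue, Matrix.cons_val_zero, mul_one, Matrix.cons_val_one,
    Matrix.cons_val_fin_one, re_mul, omega_re, mul_zero, omega_im, zero_add, im_mul, add_zero,
    trace_def]
  ring

theorem discr_one_omega (a b : R) :
    Algebra.discr R ![1, (ω : QuadraticAlgebra R a b)] = b ^ 2 + 4 * a := by
  rw [Algebra.discr_def, Matrix.det_fin_two]
  simp only [Fin.isValue, Algebra.traceMatrix_apply, Matrix.cons_val_zero,
    Algebra.traceForm_apply, mul_one, algebraTrace_quadraticAlgebra, trace_def, re_one, im_one,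
    mul_zero, add_zero, Matrix.cons_val_one, Matrix.cons_val_fin_one, omega_mul_omega_eq_mk,
    one_mul, omega_re, omega_im, zero_add]
  ring

theorem lift_bijective_of_basis {a b : R} {θ : S} (hθ : θ * θ = a • 1 + b • θ)
    {B : Module.Basis (Fin 2) R S} (hB : ⇑B = ![1, θ]) :
    Function.Bijective (QuadraticAlgebra.lift ⟨θ, hθ⟩ : QuadraticAlgebra R a b →ₐ[R] S) := by
  have hlift : (QuadraticAlgebra.lift ⟨θ, hθ⟩ : QuadraticAlgebra R a b →ₐ[R] S).toLinearMap =
      ((QuadraticAlgebra.basis a b).equiv B (Equiv.refl _)).toLinearMap := by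
    refine (QuadraticAlgebra.basis a b).ext fun i => ?_
    rw [LinearEquiv.coe_coe, Module.Basis.equiv_apply]
    fin_cases i <;> simp [hB, coe_basis_quadraticAlgebra]
  rw [← AlgHom.coe_toLinearMap, hlift]
  exact LinearEquiv.bijective _

variable {F L : Type*} [Field F] [Field L] [Algebra F L] {a b : F}
  [Fact (∀ r : F, r ^ 2 ≠ a + b * r)] {θ : L}

theorem lift_bijective_of_adjoin_eq_top (hθ : θ * θ = a • 1 + b • θ)
    (hgen : IntermediateField.adjoin F {θ} = ⊤) :
    Function.Bijective (QuadraticAlgebra.lift ⟨θ, hθ⟩ : QuadraticAlgebra F a b →ₐ[F] L) := by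
  refine ⟨RingHom.injective _, ?_⟩
  rw [← AlgHom.fieldRange_eq_top, eq_top_iff, ← hgen, IntermediateField.adjoin_le_iff,
    Set.singleton_subset_iff]
  exact ⟨ω, by simp⟩

theorem finrank_eq_two_of_adjoin_eq_top (hθ : θ * θ = a • 1 + b • θ)
    (hgen : IntermediateField.adjoin F {θ} = ⊤) : Module.finrank F L = 2 := by
  let e := AlgEquiv.ofBijective _ (lift_bijective_of_adjoin_eq_top hθ hgen)
  exact e.toLinearEquiv.finrank_eq.symm.trans (QuadraticAlgebra.finrank_eq_two a b)

theorem discr_pair_of_adjoin_eq_top (hθ : θ * θ = a • 1 + b • θ)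
    (hgen : IntermediateField.adjoin F {θ} = ⊤) : Algebra.discr F ![1, θ] = b ^ 2 + 4 * a := by
  let e := AlgEquiv.ofBijective _ (lift_bijective_of_adjoin_eq_top hθ hgen)
  have he : e ∘ ![1, ω] = ![1, θ] := by
    funext i
    fin_cases i <;> simp [e]
  rw [← he, ← Algebra.discr_eq_discr_of_algEquiv, discr_one_omega]

end QuadraticExtension

section RingOfIntegers

theorem isUnit_det_of_squarefree_discr {ι R S : Type*} [Fintype ι] [DecidableEq ι] [CommRing R]
    [CommRing S] [Algebra R S] (c : Module.Basis ι R S) {v : ι → S}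
    (hv : Squarefree (Algebra.discr R v)) : IsUnit (c.det v) := by
  refine hv _ ⟨Algebra.discr R c, ?_⟩
  rw [← sq, Module.Basis.det_apply, ← Algebra.discr_of_matrix_vecMul,
    Module.Basis.toMatrix_map_vecMul]

variable {K ι : Type*} [Field K] [NumberField K] [Fintype ι] [DecidableEq ι]

theorem intCast_discr (v : ι → 𝓞 K) :
    (Algebra.discr ℤ v : ℚ) = Algebra.discr ℚ (algebraMap (𝓞 K) K ∘ v) := by
  rw [Algebra.discr_def, Algebra.discr_def, ← eq_intCast (Int.castRingHom ℚ), RingHom.map_det]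
  congr 1
  ext i j
  simp only [RingHom.mapMatrix_apply, Matrix.map_apply, Algebra.traceMatrix_apply,
    Algebra.traceForm_apply, Function.comp_apply, ← map_mul, eq_intCast]
  exact Algebra.coe_trace_int _

theorem exists_basis_coe_eq_of_squarefree_discr (hcard : Fintype.card ι = Module.finrank ℚ K)
    {v : ι → 𝓞 K} (hv : Squarefree (Algebra.discr ℤ v)) :
    ∃ B : Module.Basis ι ℤ (𝓞 K), ⇑B = v := by
  let c := (Module.finBasisOfFinrankEq ℤ (𝓞 K)
    ((NumberField.RingOfIntegers.rank K).trans hcard.symm)).reindex (Fintype.equivFin ι).symm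
  obtain ⟨hli, hspan⟩ := c.is_basis_iff_det.mpr (isUnit_det_of_squarefree_discr c hv)
  exact ⟨.mk hli hspan.ge, Module.Basis.coe_mk _ _⟩

theorem coe_mul_self_eq_iff {a b : ℤ} {θ : 𝓞 K} :
    (θ : K) * θ = (a : ℚ) • 1 + (b : ℚ) • (θ : K) ↔ θ * θ = a • 1 + b • θ := by
  rw [NumberField.RingOfIntegers.ext_iff]
  simp [Algebra.smul_def]

theorem exists_basis_and_discr_eq_of_squarefree {a b : ℤ} [Fact (∀ r : ℚ, r ^ 2 ≠ a + b * r)]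
    {θ : 𝓞 K} (hθ : θ * θ = a • 1 + b • θ) (hgen : IntermediateField.adjoin ℚ {(θ : K)} = ⊤)
    (hsq : Squarefree (b ^ 2 + 4 * a)) :
    ∃ B : Module.Basis (Fin 2) ℤ (𝓞 K), ⇑B = ![1, θ] ∧ NumberField.discr K = b ^ 2 + 4 * a := by
  have hθK := coe_mul_self_eq_iff.mpr hθ
  have hdiscr : Algebra.discr ℤ ![1, θ] = b ^ 2 + 4 * a := by
    have hcoe : algebraMap (𝓞 K) K ∘ ![1, θ] = ![1, (θ : K)] := by
      funext i
      fin_cases i <;> simp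
    have := intCast_discr ![1, θ]
    rw [hcoe, discr_pair_of_adjoin_eq_top hθK hgen] at this
    exact_mod_cast this
  obtain ⟨B, hB⟩ := exists_basis_coe_eq_of_squarefree_discr (v := ![1, θ])
    ((Fintype.card_fin 2).trans (finrank_eq_two_of_adjoin_eq_top hθK hgen).symm) (hdiscr ▸ hsq)
  exact ⟨B, hB, by rw [← NumberField.discr_eq_discr K B, hB, hdiscr]⟩

theorem adjoin_eq_integralClosure_of_squarefree {a b : ℤ} [Fact (∀ r : ℚ, r ^ 2 ≠ a + b * r)]
    {θ : 𝓞 K} (hθ : θ * θ = a • 1 + b • θ) (hgen : IntermediateField.adjoin ℚ {(θ : K)} = ⊤)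
    (hsq : Squarefree (b ^ 2 + 4 * a)) :
    Algebra.adjoin ℤ {(θ : K)} = integralClosure ℤ K := by
  obtain ⟨B, hB, -⟩ := exists_basis_and_discr_eq_of_squarefree hθ hgen hsq
  apply le_antisymm
  · exact Algebra.adjoin_le (Set.singleton_subset_iff.mpr θ.isIntegral_coe)
  · intro z hz
    have hrepr := B.sum_repr ⟨z, hz⟩
    rw [Fin.sum_univ_two, hB] at hrepr
    have hz_eq : z = (B.repr ⟨z, hz⟩ 0 : K) + B.repr ⟨z, hz⟩ 1 * θ := by
      simpa using congrArg (algebraMap (𝓞 K) K) hrepr.symm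
    rw [hz_eq]
    exact add_mem (intCast_mem _ _)
      (mul_mem (intCast_mem _ _) (Algebra.self_mem_adjoin_singleton ℤ _))

end RingOfIntegers

section Discriminant411

variable {R : Type*} [CommRing R] [IsDedekindDomain R] (e : QuadraticAlgebra ℤ (-10609) 205 ≃+* R)

-- Modulo `5` and `7`, `111` is congruent to `205 - 104` and `104`; the relation comes from
-- `X ^ 2 - 205 * X + 10609` taking the value `175 = 5 * 5 * 7` at `111`.
theorem rootClass_seven : rootClass e 7 104 = rootClass e 5 104 ^ 2 := by
  have h175 : rootClass e 5 111 * rootClass e 5 111 * rootClass e 7 111 = 1 := by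
    rw [rootClass.mul_same_root e (by norm_num) (by norm_num),
      rootClass.mul_same_root e (by norm_num) (by norm_num),
      rootClass.eq_one e (by norm_num)]
  have hconj : rootClass e 5 104 * rootClass e 5 (205 - 104) = 1 :=
    rootClass.mul_conj e (k := 21) (by norm_num) (by norm_num)
  rw [rootClass.congr e (show 111 ≡ 205 - 104 [ZMOD 5] by decide),
    rootClass.congr e (show 111 ≡ 104 [ZMOD 7] by decide), eq_inv_of_mul_eq_one_right hconj] at h175
  rw [eq_inv_of_mul_eq_one_right h175]
  group

-- The relation comes from `X ^ 2 - 205 * X + 10609` taking the value `105 = 3 * 5 * 7` at `104`.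
theorem rootClass_three : rootClass e 3 104 = (rootClass e 5 104 ^ 3)⁻¹ := by
  have h105 : rootClass e 3 104 * rootClass e 5 104 * rootClass e 7 104 = 1 := by
    rw [rootClass.mul_same_root e (by norm_num) (by norm_num),
      rootClass.mul_same_root e (by norm_num) (by norm_num),
      rootClass.eq_one e (by norm_num)]
  rw [rootClass_seven, mul_assoc, ← pow_succ'] at h105
  exact eq_inv_of_mul_eq_one_left h105

theorem rootClass_five_pow_six : rootClass e 5 104 ^ 6 = 1 := by
  have hconj : rootClass e 3 104 * rootClass e 3 (205 - 104) = 1 :=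
    rootClass.mul_conj e (k := 35) (by norm_num) (by norm_num)
  rw [rootClass.congr e (show 205 - 104 ≡ 104 [ZMOD 3] by decide), rootClass_three, ← mul_inv,
    ← pow_add] at hconj
  exact inv_eq_one.mp hconj

theorem orderOf_rootClass_five : orderOf (rootClass e 5 104) = 6 := by
  have hseven : rootClass e 5 104 ^ 2 ≠ 1 :=
    rootClass_seven e ▸ rootClass.ne_one e (by norm_num) (by norm_num) (by norm_num)
  have hthree : rootClass e 5 104 ^ 3 ≠ 1 := by
    rw [← inv_ne_one, ← rootClass_three]
    exact rootClass.ne_one e (by norm_num) (by norm_num) (by norm_num)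
  refine orderOf_eq_of_pow_and_pow_div_prime (by norm_num) (rootClass_five_pow_six e) ?_
  intro p hp hdvd
  obtain rfl | rfl : p = 2 ∨ p = 3 := by
    have hle := Nat.le_of_dvd (by norm_num) hdvd
    interval_cases p <;> revert hp hdvd <;> decide
  · exact hthree
  · exact hseven

theorem mk0_mem_zpowers_rootClass_five {p : ℕ} (hp : p.Prime) (hlt : p < 13) {P : (Ideal R)⁰}
    (hP : (P : Ideal R) ≠ ⊤) (hpP : (p : R) ∈ (P : Ideal R)) :
    ClassGroup.mk0 P ∈ Subgroup.zpowers (rootClass e 5 104) := by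
  obtain rfl | rfl | rfl | rfl | rfl : p = 2 ∨ p = 3 ∨ p = 5 ∨ p = 7 ∨ p = 11 := by
    interval_cases p <;> revert hp <;> decide
  · rw [rootClass.mk0_eq_one_of_forall_zmod_ne_zero e hp (by decide) hP hpP]
    exact one_mem _
  · have h := rootClass.mk0_mem_zpowers e (p := 3) (s := 104) (k := 35) (by norm_num) (by norm_num)
      (by norm_num) hP (by exact_mod_cast hpP)
    rw [rootClass_three, Subgroup.zpowers_inv] at h
    exact Subgroup.zpowers_le.mpr (pow_mem (Subgroup.mem_zpowers _) 3) h
  · exact rootClass.mk0_mem_zpowers e (k := 21) (by norm_num) (by norm_num)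
      (by norm_num) hP (by exact_mod_cast hpP)
  · have h := rootClass.mk0_mem_zpowers e (p := 7) (s := 104) (k := 15) (by norm_num) (by norm_num)
      (by norm_num) hP (by exact_mod_cast hpP)
    rw [rootClass_seven] at h
    exact Subgroup.zpowers_le.mpr (pow_mem (Subgroup.mem_zpowers _) 2) h
  · rw [rootClass.mk0_eq_one_of_forall_zmod_ne_zero e hp (by decide) hP hpP]
    exact one_mem _

variable {K : Type*} [Field K] [NumberField K]

theorem exists_mk0_eq_absNorm_lt_thirteen (hK : Module.finrank ℚ K = 2)
    (hdiscr : NumberField.discr K = -411) (C : ClassGroup (𝓞 K)) :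
    ∃ I : (Ideal (𝓞 K))⁰, ClassGroup.mk0 I = C ∧ absNorm (I : Ideal (𝓞 K)) < 13 := by
  obtain ⟨I, hIC, hI⟩ := exists_mk0_eq_absNorm_le_of_finrank_eq_two hK C
  refine ⟨I, hIC, ?_⟩
  rw [hdiscr, Int.cast_neg, abs_neg, Int.cast_ofNat, abs_of_pos (by norm_num)] at hI
  exact_mod_cast hI.trans_lt two_div_pi_mul_sqrt_lt

theorem mem_zpowers_rootClass_five (e : QuadraticAlgebra ℤ (-10609) 205 ≃+* 𝓞 K)
    (hK : Module.finrank ℚ K = 2) (hdiscr : NumberField.discr K = -411) (C : ClassGroup (𝓞 K)) :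
    C ∈ Subgroup.zpowers (rootClass e 5 104) :=
  (Subgroup.eq_top_iff' _).mp (subgroup_classGroup_eq_top_of_forall_prime_lt
    (exists_mk0_eq_absNorm_lt_thirteen hK hdiscr) fun _ hp hlt _ hP hpP =>
      mk0_mem_zpowers_rootClass_five e hp hlt hP hpP) C

instance : Fact (∀ r : ℚ, r ^ 2 ≠ (-10609 : ℤ) + (205 : ℤ) * r) :=
  ⟨fun r hr => by push_cast at hr; nlinarith [sq_nonneg (2 * r - 205)]⟩

theorem squarefree_neg_411 : Squarefree (-411 : ℤ) := by
  rw [← Int.squarefree_natAbs, show (-411 : ℤ).natAbs = 3 * 137 by norm_num,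
    Nat.squarefree_mul (by norm_num)]
  exact ⟨Nat.prime_three.prime.squarefree, (Nat.Prime.prime (by norm_num)).squarefree⟩

theorem isCyclic_classGroup_and_card_eq_six {θ : 𝓞 K}
    (hθ : θ * θ = (-10609 : ℤ) • 1 + (205 : ℤ) • θ)
    (hgen : IntermediateField.adjoin ℚ {(θ : K)} = ⊤) :
    IsCyclic (ClassGroup (𝓞 K)) ∧ Nat.card (ClassGroup (𝓞 K)) = 6 := by
  obtain ⟨B, hB, hdiscr⟩ := exists_basis_and_discr_eq_of_squarefree hθ hgen squarefree_neg_411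
  have hK := finrank_eq_two_of_adjoin_eq_top (coe_mul_self_eq_iff.mpr hθ) hgen
  have hmem := mem_zpowers_rootClass_five (.ofBijective _ (lift_bijective_of_basis hθ hB)) hK
    (hdiscr.trans (by norm_num))
  refine ⟨⟨_, hmem⟩, ?_⟩
  rw [← orderOf_eq_card_of_forall_mem_zpowers hmem, orderOf_rootClass_five]

end Discriminant411

/-- Let `K = ℚ[X]/(X² − 205X + 10609)` (that is, `K = ℚ(α)` where `α` is a root of
`X² − 205X + 10609`). Then `K` is an imaginary quadratic field, isomorphic to
`ℚ(√−411)`, the subring `ℤ[α]` equals the ring of integers of `K`, and the class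
group of `K` is cyclic of order 6. -/
theorem statement_12 (K : Type*) [Field K] [Algebra ℚ K] (α : K)
    (hα : α ^ 2 - 205 * α + 10609 = 0)
    (hgen : IntermediateField.adjoin ℚ {α} = ⊤) :
    Module.finrank ℚ K = 2 ∧
    (∃ β : K, β ^ 2 = -411) ∧
    Algebra.adjoin ℤ ({α} : Set K) = integralClosure ℤ K ∧
    IsCyclic (ClassGroup (integralClosure ℤ K)) ∧
    Nat.card (ClassGroup (integralClosure ℤ K)) = 6 := by
  have hchar : CharZero K := algebraRat.charZero K
  obtain rfl : ‹Algebra ℚ K› = DivisionRing.toRatAlgebra := Subsingleton.elim _ _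
  have hint : IsIntegral ℤ α := ⟨.X ^ 2 - 205 * .X + 10609, by monicity!, by simpa using hα⟩
  have hα_rat : α * α = ((-10609 : ℤ) : ℚ) • 1 + ((205 : ℤ) : ℚ) • α := by
    simp only [Algebra.smul_def, Int.cast_neg, Int.cast_ofNat, eq_ratCast, Rat.cast_neg,
      Rat.cast_ofNat, mul_one]
    linear_combination hα
  have hK : Module.finrank ℚ K = 2 := finrank_eq_two_of_adjoin_eq_top hα_rat hgen
  have : FiniteDimensional ℚ K := .of_finrank_pos (by omega)
  have : NumberField K := ⟨⟩
  obtain ⟨θ, rfl⟩ : ∃ θ : 𝓞 K, (θ : K) = α := ⟨⟨α, hint⟩, rfl⟩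
  have hθ := coe_mul_self_eq_iff.mp hα_rat
  exact ⟨hK, ⟨2 * θ - 205, by linear_combination 4 * hα⟩,
    adjoin_eq_integralClosure_of_squarefree hθ hgen squarefree_neg_411,
    isCyclic_classGroup_and_card_eq_six hθ hgen⟩
end
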